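/- arXiv:1905.02176 — 2 statements merged into one kernel-verified Lean document; each statement's English description precedes it below -/
import Mathlib

section
/- Let n ≥ 2, let Ω ⊂ ℝⁿ be open and bounded with Lipschitz boundary S = ∂Ω, let p ∈ S and r > 0, and assume the limit Γ(p) := lim_{ε→0⁺} H^{n−1}(Ω ∩ ∂B_ε(p)) / H^{n−1}(∂B_ε(p)) exists. Then the principal value limit lim_{ε→0⁺} ∫_{S ∩ (B_r(p) ∖ B_ε(p))} (1 − rⁿ/|x − p|ⁿ) (x − p) · ν dH^{n−1}(x) exists and is finite. -/
open MeasureTheory Metric Filter Real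
open scoped Topology RealInnerProductSpace ENNReal NNReal

noncomputable section

/-- `v` is the (measure-theoretic) outward unit normal to `Ω` at the boundary point `x`:
`v` is a unit vector, moving from `x` in any direction making a negative angle with `v`
eventually enters `Ω`, and moving in any direction making a positive angle with `v`
eventually leaves the closure of `Ω`. -/
def IsOutwardNormalAt {n : ℕ} (Ω : Set (EuclideanSpace ℝ (Fin n)))
    (x v : EuclideanSpace ℝ (Fin n)) : Prop :=
  ‖v‖ = 1 ∧ ∀ w : EuclideanSpace ℝ (Fin n),
    (⟪w, v⟫ < 0 → ∀ᶠ t in 𝓝[>] (0 : ℝ), x + t • w ∈ Ω) ∧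
    (0 < ⟪w, v⟫ → ∀ᶠ t in 𝓝[>] (0 : ℝ), x + t • w ∉ closure Ω)

/-- The first `n-1` coordinates of a point of `ℝⁿ`. -/
def firstCoords {n : ℕ} (x : EuclideanSpace ℝ (Fin n)) :
    EuclideanSpace ℝ (Fin (n - 1)) :=
  (WithLp.equiv 2 (∀ _ : Fin (n - 1), ℝ)).symm
    (fun i => x ⟨i.1, lt_of_lt_of_le i.2 (Nat.sub_le n 1)⟩)

/-- The last coordinate of a point of `ℝⁿ`. -/
def lastCoord {n : ℕ} (x : EuclideanSpace ℝ (Fin n)) : ℝ :=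
  if h : 0 < n then x ⟨n - 1, Nat.sub_lt h Nat.one_pos⟩ else 0

/-- An open set `Ω ⊆ ℝⁿ` has Lipschitz boundary if near every boundary point, after a rigid
motion taking the point to the origin, `Ω` coincides with the open region above the graph of
a Lipschitz function of the first `n-1` coordinates. -/
def HasLipschitzBoundary {n : ℕ} (Ω : Set (EuclideanSpace ℝ (Fin n))) : Prop :=
  ∀ p ∈ frontier Ω,
    ∃ (A : EuclideanSpace ℝ (Fin n) ≃ᵃⁱ[ℝ] EuclideanSpace ℝ (Fin n))
      (f : EuclideanSpace ℝ (Fin (n - 1)) → ℝ) (K : ℝ≥0)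
      (U : Set (EuclideanSpace ℝ (Fin n))),
      A p = 0 ∧ LipschitzWith K f ∧ IsOpen U ∧ p ∈ U ∧
      ∀ x ∈ U, (x ∈ Ω ↔ f (firstCoords (A x)) < lastCoord (A x))

/-!
Over a Lipschitz graph `{(y, f y)}` the vector `(∇f, -1)` is the surface Jacobian times the outward
normal `ν`, so the area formula turns `∫ k(|x|) ⟪x, ν⟫ dHⁿ⁻¹` into the integral of
`k(|(y, f y)|) (f'(y) y - f y)` over the parameter space.

Let `G` be the supergraph of `f`, let `A(t)` be the measure of the directions `θ` with `t θ ∈ G`,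
and let `φ` be smooth and vanish near `0` and near `∞`. Differentiating
`c ↦ ∫_{cG} φ(|x|) / |x|ⁿ dx` at `c = 1`, on the one hand as the first variation of a region above a
graph and on the other hand in polar coordinates, gives
`∫ φ(|(y, f y)|) / |(y, f y)|ⁿ (f'(y) y - f y) dy = ∫ φ'(t) A(t) dt`.
As `φ` approaches the indicator of `[a, c)`, the right-hand side is a difference of two averages of
`A`, so the solid angle of the part of the graph with `a ≤ |x| < c` is at most twice the maximal
distance of `A` on `(0, c]` to any given constant. By the uniqueness of uniformly distributed
measures, the normalized Hausdorff measure on a sphere is the normalized polar measure, so `A` has a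
limit at `0⁺` exactly when `Γ(p)` exists. The Cauchy criterion then yields the principal value; the
term without `|x|⁻ⁿ` is harmless.
-/

section Graph

variable {E F : Type*}

/-- The graph parametrization `y ↦ (y, f y)` of a map `f`. Its values lie in the `L²` product, so
that Hausdorff measures on the graph are the Euclidean ones. -/
def graphMap (f : E → F) (y : E) : WithLp 2 (E × F) := WithLp.toLp 2 (y, f y)

@[simp]
theorem graphMap_fst (f : E → F) (y : E) : (graphMap f y).fst = y := rfl

@[simp]
theorem graphMap_snd (f : E → F) (y : E) : (graphMap f y).snd = f y := rfl

variable [NormedAddCommGroup E] [NormedAddCommGroup F]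

theorem norm_graphMap_sub_graphMap_le (f g : E → F) (x y : E) :
    ‖graphMap f x - graphMap f y‖ ≤
      ‖graphMap g x - graphMap g y‖ + ‖(f x - f y) - (g x - g y)‖ := by
  have hsplit : graphMap f x - graphMap f y =
      graphMap g x - graphMap g y + WithLp.toLp 2 ((0 : E), (f x - f y) - (g x - g y)) := by
    apply WithLp.ofLp_injective 2
    ext <;> simp [graphMap]
  rw [hsplit]
  refine (norm_add_le _ _).trans_eq ?_
  rw [WithLp.norm_toLp_snd]

theorem norm_sub_le_norm_graphMap_sub_graphMap (f : E → F) (x y : E) :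
    ‖x - y‖ ≤ ‖graphMap f x - graphMap f y‖ := by
  simpa using WithLp.norm_fst_le E (graphMap f x - graphMap f y)

theorem lipschitzWith_graphMap {f : E → F} {K : ℝ≥0} (hf : LipschitzWith K f) :
    LipschitzWith (1 + K) (graphMap f) := by
  refine LipschitzWith.of_dist_le_mul fun x y ↦ ?_
  have hzero : graphMap (0 : E → F) x - graphMap 0 y = WithLp.toLp 2 (x - y, 0) := by
    apply WithLp.ofLp_injective 2
    ext <;> simp [graphMap]
  have hle := norm_graphMap_sub_graphMap_le f 0 x y
  have hlip := hf.dist_le_mul x y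
  simp only [hzero, WithLp.norm_toLp_fst, Pi.zero_apply, sub_zero] at hle
  rw [dist_eq_norm, dist_eq_norm] at *
  push_cast
  linarith

theorem isClosedEmbedding_graphMap {f : E → F} (hf : Continuous f) :
    Topology.IsClosedEmbedding (graphMap f) :=
  Function.LeftInverse.isClosedEmbedding (f := WithLp.fst) (fun _ ↦ rfl)
    (WithLp.continuous_fst 2 E F)
    ((WithLp.prod_continuous_toLp 2 E F).comp (continuous_id.prodMk hf))

theorem hausdorffMeasure_graphMap_image_le [MeasurableSpace E] [BorelSpace E]
    [MeasurableSpace F] [BorelSpace F] [SecondCountableTopologyEither E F]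
    {f g : E → F} {t : Set E} {η : ℝ≥0} {d : ℝ} (hd : 0 ≤ d)
    (h : ∀ x ∈ t, ∀ y ∈ t, ‖(f x - f y) - (g x - g y)‖ ≤ η * ‖x - y‖) :
    μH[d] (graphMap f '' t) ≤ ((1 + η : ℝ≥0) : ℝ≥0∞) ^ d * μH[d] (graphMap g '' t) := by
  have himage : graphMap f '' t = (graphMap f ∘ WithLp.fst) '' (graphMap g '' t) := by
    rw [Set.image_image]
    rfl
  rw [himage]
  refine LipschitzOnWith.hausdorffMeasure_image_le (LipschitzOnWith.of_dist_le_mul ?_) hd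
  rintro _ ⟨x, hx, rfl⟩ _ ⟨y, hy, rfl⟩
  simp only [Function.comp_apply, graphMap_fst, dist_eq_norm]
  push_cast
  calc ‖graphMap f x - graphMap f y‖
      ≤ ‖graphMap g x - graphMap g y‖ + η * ‖x - y‖ :=
        (norm_graphMap_sub_graphMap_le f g x y).trans (by gcongr; exact h x hx y hy)
    _ ≤ (1 + η) * ‖graphMap g x - graphMap g y‖ := by
        rw [one_add_mul]
        gcongr
        exact norm_sub_le_norm_graphMap_sub_graphMap g x y

end Graph

section GraphJacobian

variable {E : Type*} [NormedAddCommGroup E] [InnerProductSpace ℝ E]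

/-- The factor `√(1 + ‖L‖²)` by which `x ↦ (x, L x)` scales the surface measure, for a linear
functional `L`. -/
def graphJacobian (L : E →L[ℝ] ℝ) : ℝ := √(1 + ‖L‖ ^ 2)

theorem one_le_graphJacobian (L : E →L[ℝ] ℝ) : 1 ≤ graphJacobian L := by
  rw [graphJacobian, Real.one_le_sqrt]
  exact le_add_of_nonneg_right (sq_nonneg _)

theorem graphJacobian_pos (L : E →L[ℝ] ℝ) : 0 < graphJacobian L :=
  one_pos.trans_le (one_le_graphJacobian L)

theorem sq_graphJacobian (L : E →L[ℝ] ℝ) : graphJacobian L ^ 2 = 1 + ‖L‖ ^ 2 :=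
  Real.sq_sqrt (by positivity)

theorem graphJacobian_le_mul {L M : E →L[ℝ] ℝ} {η : ℝ} (h : ‖L - M‖ ≤ η) :
    graphJacobian L ≤ (1 + η) * graphJacobian M := by
  have hη : 0 ≤ η := (norm_nonneg _).trans h
  have hL : ‖L‖ ≤ ‖M‖ + η := by linarith [norm_le_norm_add_norm_sub' L M]
  have hM : ‖M‖ ≤ graphJacobian M := Real.le_sqrt_of_sq_le (by linarith)
  have hadd : graphJacobian L ≤ graphJacobian M + η := by
    refine Real.sqrt_le_iff.2 ⟨by linarith [graphJacobian_pos M], ?_⟩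
    nlinarith [norm_nonneg L, sq_graphJacobian M]
  nlinarith [one_le_graphJacobian M]

theorem ofReal_graphJacobian_le_mul {L M : E →L[ℝ] ℝ} {η : ℝ≥0} (h : ‖L - M‖ ≤ η) :
    ENNReal.ofReal (graphJacobian L) ≤
      ((1 + η : ℝ≥0) : ℝ≥0∞) * ENNReal.ofReal (graphJacobian M) := by
  rw [← ENNReal.ofReal_coe_nnreal, ← ENNReal.ofReal_mul NNReal.zero_le_coe]
  exact ENNReal.ofReal_le_ofReal (graphJacobian_le_mul h)

variable [FiniteDimensional ℝ E]

theorem normDet_eq_graphJacobian (Ψ : E →ₗ[ℝ] WithLp 2 (E × ℝ)) (L : E →L[ℝ] ℝ)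
    (hΨ : ∀ x, Ψ x = graphMap L x) : Ψ.normDet = graphJacobian L := by
  set a : E := (InnerProductSpace.toDual ℝ E).symm L
  have hL : ∀ x, L x = ⟪a, x⟫ := fun _ ↦ (InnerProductSpace.toDual_symm_apply).symm
  have hadjoint : LinearMap.adjoint Ψ ∘ₗ Ψ = LinearMap.transvection (L : E →ₗ[ℝ] ℝ) a := by
    ext x
    refine ext_inner_right ℝ fun y ↦ ?_
    rw [LinearMap.comp_apply, LinearMap.adjoint_inner_left, hΨ, hΨ]
    simp [LinearMap.transvection.apply, inner_add_left, inner_smul_left, hL, graphMap,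
      WithLp.prod_inner_apply, mul_comm]
  have hLa : L a = ‖L‖ ^ 2 := by
    rw [hL, real_inner_self_eq_norm_sq, LinearIsometryEquiv.norm_map]
  have hsq : Ψ.normDet ^ 2 = 1 + ‖L‖ ^ 2 := by
    have := Ψ.normDet_sq
    rw [hadjoint, LinearMap.transvection.det] at this
    simpa [hLa] using this
  rw [graphJacobian, ← hsq, Real.sqrt_sq Ψ.normDet_nonneg]

variable [MeasurableSpace E] [BorelSpace E]

theorem hausdorffMeasure_graphMap_linear_image (L : E →L[ℝ] ℝ) (s : Set E) :
    μH[Module.finrank ℝ E] (graphMap L '' s) =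
      ENNReal.ofReal (graphJacobian L) * μH[Module.finrank ℝ E] s := by
  let Ψ : E →ₗ[ℝ] WithLp 2 (E × ℝ) :=
    (WithLp.linearEquiv 2 ℝ (E × ℝ)).symm.toLinearMap ∘ₗ LinearMap.prod LinearMap.id L
  rw [← normDet_eq_graphJacobian Ψ L fun _ ↦ rfl, ← Ψ.hausdorffMeasure_image]
  rfl

end GraphJacobian

section AreaFormula

variable {E : Type*} [NormedAddCommGroup E] [InnerProductSpace ℝ E] [FiniteDimensional ℝ E]
  [MeasurableSpace E] [BorelSpace E] {f : E → ℝ} {L : E →L[ℝ] ℝ} {s t : Set E} {η : ℝ≥0}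

theorem ae_norm_fderiv_sub_le (μ : Measure E) [μ.IsAddHaarMeasure]
    (hL : ApproximatesLinearOn f L t η) (ht : MeasurableSet t)
    (hd : ∀ x ∈ t, DifferentiableAt ℝ f x) :
    ∀ᵐ x ∂μ.restrict t, ‖fderiv ℝ f x - L‖ ≤ η := by
  rcases subsingleton_or_nontrivial E with hE | hE
  · exact .of_forall fun x ↦ by simp [Subsingleton.elim (fderiv ℝ f x) L]
  obtain ⟨e, he⟩ := exists_norm_eq E zero_le_one
  have happrox : ApproximatesLinearOn (fun y ↦ f y • e) (L.smulRight e) t η := by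
    intro x hx y hy
    rw [ContinuousLinearMap.smulRight_apply, ← sub_smul, ← sub_smul, norm_smul, he, mul_one]
    exact hL x hx y hy
  have hbound := happrox.norm_fderiv_sub_le μ ht (fun x ↦ (fderiv ℝ f x).smulRight e)
    fun x hx ↦ ((hd x hx).hasFDerivAt.smul_const e).hasFDerivWithinAt
  filter_upwards [hbound] with x hx
  have hsub : (fderiv ℝ f x).smulRight e - L.smulRight e = (fderiv ℝ f x - L).smulRight e := by
    ext
    simp [sub_smul]
  rw [hsub, ← NNReal.coe_le_coe, coe_nnnorm, ContinuousLinearMap.norm_smulRight_apply, he,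
    mul_one] at hx
  exact hx

theorem hausdorffMeasure_graphMap_image_le_lintegral (hL : ApproximatesLinearOn f L t η)
    (ht : MeasurableSet t) (hd : ∀ x ∈ t, DifferentiableAt ℝ f x) :
    μH[Module.finrank ℝ E] (graphMap f '' t) ≤
      ((1 + η : ℝ≥0) : ℝ≥0∞) ^ (Module.finrank ℝ E + 1) *
        ∫⁻ y in t, ENNReal.ofReal (graphJacobian (fderiv ℝ f y)) ∂μH[Module.finrank ℝ E] := by
  set d := Module.finrank ℝ E
  calc μH[d] (graphMap f '' t)
      ≤ ((1 + η : ℝ≥0) : ℝ≥0∞) ^ (d : ℝ) * μH[d] (graphMap L '' t) :=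
        hausdorffMeasure_graphMap_image_le d.cast_nonneg fun x hx y hy ↦ by
          simpa using hL x hx y hy
    _ = ((1 + η : ℝ≥0) : ℝ≥0∞) ^ d * ∫⁻ _ in t, ENNReal.ofReal (graphJacobian L) ∂μH[d] := by
        rw [ENNReal.rpow_natCast, hausdorffMeasure_graphMap_linear_image, setLIntegral_const]
    _ ≤ ((1 + η : ℝ≥0) : ℝ≥0∞) ^ d *
          ∫⁻ y in t, ((1 + η : ℝ≥0) : ℝ≥0∞) *
            ENNReal.ofReal (graphJacobian (fderiv ℝ f y)) ∂μH[d] := by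
        gcongr 1
        refine lintegral_mono_ae ((ae_norm_fderiv_sub_le μH[d] hL ht hd).mono fun y hy ↦ ?_)
        exact ofReal_graphJacobian_le_mul (by rwa [norm_sub_rev])
    _ = _ := by rw [lintegral_const_mul' _ _ ENNReal.coe_ne_top, pow_succ, mul_assoc]

theorem lintegral_graphJacobian_le (hL : ApproximatesLinearOn f L t η)
    (ht : MeasurableSet t) (hd : ∀ x ∈ t, DifferentiableAt ℝ f x) :
    ∫⁻ y in t, ENNReal.ofReal (graphJacobian (fderiv ℝ f y)) ∂μH[Module.finrank ℝ E] ≤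
      ((1 + η : ℝ≥0) : ℝ≥0∞) ^ (Module.finrank ℝ E + 1) *
        μH[Module.finrank ℝ E] (graphMap f '' t) := by
  set d := Module.finrank ℝ E
  calc ∫⁻ y in t, ENNReal.ofReal (graphJacobian (fderiv ℝ f y)) ∂μH[d]
      ≤ ∫⁻ _ in t, ((1 + η : ℝ≥0) : ℝ≥0∞) * ENNReal.ofReal (graphJacobian L) ∂μH[d] :=
        lintegral_mono_ae ((ae_norm_fderiv_sub_le μH[d] hL ht hd).mono fun _ ↦
          ofReal_graphJacobian_le_mul)
    _ = ((1 + η : ℝ≥0) : ℝ≥0∞) * μH[d] (graphMap L '' t) := by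
        rw [hausdorffMeasure_graphMap_linear_image, setLIntegral_const, mul_assoc]
    _ ≤ ((1 + η : ℝ≥0) : ℝ≥0∞) *
          (((1 + η : ℝ≥0) : ℝ≥0∞) ^ (d : ℝ) * μH[d] (graphMap f '' t)) := by
        gcongr
        refine hausdorffMeasure_graphMap_image_le d.cast_nonneg fun x hx y hy ↦ ?_
        simpa [norm_sub_rev] using hL x hx y hy
    _ = _ := by rw [ENNReal.rpow_natCast, ← mul_assoc, ← pow_succ']

theorem hausdorffMeasure_graphMap_image_bounds (hf : Continuous f) (hs : MeasurableSet s)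
    (hd : ∀ x ∈ s, DifferentiableAt ℝ f x) (hη : η ≠ 0) :
    μH[Module.finrank ℝ E] (graphMap f '' s) ≤
        ((1 + η : ℝ≥0) : ℝ≥0∞) ^ (Module.finrank ℝ E + 1) *
          ∫⁻ y in s, ENNReal.ofReal (graphJacobian (fderiv ℝ f y)) ∂μH[Module.finrank ℝ E] ∧
      ∫⁻ y in s, ENNReal.ofReal (graphJacobian (fderiv ℝ f y)) ∂μH[Module.finrank ℝ E] ≤
        ((1 + η : ℝ≥0) : ℝ≥0∞) ^ (Module.finrank ℝ E + 1) *
          μH[Module.finrank ℝ E] (graphMap f '' s) := by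
  set d := Module.finrank ℝ E
  have hemb := (isClosedEmbedding_graphMap hf).measurableEmbedding
  obtain ⟨t, A, hdisj, ht, hcover, happrox, -⟩ :=
    exists_partition_approximatesLinearOn_of_hasFDerivWithinAt f s (fderiv ℝ f)
      (fun x hx ↦ (hd x hx).hasFDerivAt.hasFDerivWithinAt) (fun _ ↦ η) (fun _ ↦ hη)
  have hst : ∀ k, MeasurableSet (s ∩ t k) := fun k ↦ hs.inter (ht k)
  have hunion : s = ⋃ k, s ∩ t k := by
    rw [← Set.inter_iUnion, Set.inter_eq_left.2 hcover]
  have hdisj' : Pairwise (Function.onFun Disjoint fun k ↦ s ∩ t k) := fun i j hij ↦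
    (hdisj hij).mono Set.inter_subset_right Set.inter_subset_right
  have himage : μH[d] (graphMap f '' s) = ∑' k, μH[d] (graphMap f '' (s ∩ t k)) := by
    conv_lhs => rw [hunion, Set.image_iUnion]
    refine measure_iUnion ?_ fun k ↦ hemb.measurableSet_image.2 (hst k)
    exact fun i j hij ↦ (Set.disjoint_image_iff hemb.injective).2 (hdisj' hij)
  have hlintegral : ∫⁻ y in s, ENNReal.ofReal (graphJacobian (fderiv ℝ f y)) ∂μH[d] =
      ∑' k, ∫⁻ y in s ∩ t k, ENNReal.ofReal (graphJacobian (fderiv ℝ f y)) ∂μH[d] := by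
    conv_lhs => rw [hunion]
    exact lintegral_iUnion hst hdisj' _
  rw [himage, hlintegral, ← ENNReal.tsum_mul_left, ← ENNReal.tsum_mul_left]
  exact ⟨ENNReal.tsum_le_tsum fun k ↦ hausdorffMeasure_graphMap_image_le_lintegral
      (happrox k) (hst k) fun x hx ↦ hd x hx.1,
    ENNReal.tsum_le_tsum fun k ↦ lintegral_graphJacobian_le
      (happrox k) (hst k) fun x hx ↦ hd x hx.1⟩

theorem hausdorffMeasure_graphMap_image_of_differentiableAt (hf : Continuous f)
    (hs : MeasurableSet s) (hd : ∀ x ∈ s, DifferentiableAt ℝ f x) :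
    μH[Module.finrank ℝ E] (graphMap f '' s) =
      ∫⁻ y in s, ENNReal.ofReal (graphJacobian (fderiv ℝ f y)) ∂μH[Module.finrank ℝ E] := by
  have hlim : ∀ a : ℝ≥0∞,
      Tendsto (fun η : ℝ≥0 ↦ ((1 + η : ℝ≥0) : ℝ≥0∞) ^ (Module.finrank ℝ E + 1) * a)
        (𝓝[≠] 0) (𝓝 a) := by
    intro a
    have hpow : Tendsto (fun η : ℝ≥0 ↦ (((1 + η) ^ (Module.finrank ℝ E + 1) : ℝ≥0) : ℝ≥0∞))
        (𝓝[≠] 0) (𝓝 (((1 + 0) ^ (Module.finrank ℝ E + 1) : ℝ≥0) : ℝ≥0∞)) :=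
      ENNReal.tendsto_coe.2
        ((Continuous.tendsto (by fun_prop) 0).mono_left nhdsWithin_le_nhds)
    simpa using ENNReal.Tendsto.mul_const hpow (b := a) (Or.inl (by simp))
  refine le_antisymm (ge_of_tendsto (hlim _) ?_) (ge_of_tendsto (hlim _) ?_)
  · filter_upwards [self_mem_nhdsWithin] with η hη
    exact (hausdorffMeasure_graphMap_image_bounds hf hs hd hη).1
  · filter_upwards [self_mem_nhdsWithin] with η hη
    exact (hausdorffMeasure_graphMap_image_bounds hf hs hd hη).2

theorem hausdorffMeasure_graphMap_image {K : ℝ≥0} (hf : LipschitzWith K f)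
    (hs : MeasurableSet s) :
    μH[Module.finrank ℝ E] (graphMap f '' s) =
      ∫⁻ y in s, ENNReal.ofReal (graphJacobian (fderiv ℝ f y)) ∂μH[Module.finrank ℝ E] := by
  set d := Module.finrank ℝ E
  let D := {y | DifferentiableAt ℝ f y}
  have hD : MeasurableSet D := measurableSet_of_differentiableAt ℝ f
  have hnull : μH[d] (s \ D) = 0 :=
    measure_mono_null (fun _ hx ↦ hx.2) (hf.ae_differentiableAt (μ := μH[d]))
  have hnull_image : μH[d] (graphMap f '' (s \ D)) = 0 := by
    refine le_antisymm (((lipschitzWith_graphMap hf).hausdorffMeasure_image_le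
      d.cast_nonneg _).trans ?_) bot_le
    rw [hnull, mul_zero]
  have hsD : (s ∩ D : Set E) =ᵐ[μH[d]] s := by
    rw [← Set.sdiff_sdiff_right_self]
    exact sdiff_null_ae_eq_self hnull
  rw [← setLIntegral_congr hsD, ← hausdorffMeasure_graphMap_image_of_differentiableAt hf.continuous
    (hs.inter hD) fun _ hx ↦ hx.2]
  conv_lhs => rw [← Set.inter_union_sdiff s D, Set.image_union]
  exact le_antisymm ((measure_union_le _ _).trans_eq (by rw [hnull_image, add_zero]))
    (measure_mono Set.subset_union_left)

end AreaFormula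

section GraphIntegral

variable {E : Type*} [NormedAddCommGroup E] [InnerProductSpace ℝ E] [MeasurableSpace E]
  [BorelSpace E]

theorem measurable_graphJacobian_fderiv (f : E → ℝ) :
    Measurable fun y ↦ graphJacobian (fderiv ℝ f y) := by
  have hcont : Continuous fun L : E →L[ℝ] ℝ ↦ graphJacobian L := by
    unfold graphJacobian
    fun_prop
  exact hcont.measurable.comp (measurable_fderiv ℝ f)

variable [FiniteDimensional ℝ E] {f : E → ℝ} {K : ℝ≥0}

theorem hausdorffMeasure_restrict_range_graphMap (hf : LipschitzWith K f) :
    (μH[Module.finrank ℝ E] : Measure (WithLp 2 (E × ℝ))).restrict (Set.range (graphMap f)) =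
      ((μH[Module.finrank ℝ E] : Measure E).withDensity
        fun y ↦ ENNReal.ofReal (graphJacobian (fderiv ℝ f y))).map (graphMap f) := by
  have hemb := (isClosedEmbedding_graphMap hf.continuous).measurableEmbedding
  ext B hB
  rw [Measure.restrict_apply hB, hemb.map_apply, withDensity_apply _ (hemb.measurable hB),
    ← hausdorffMeasure_graphMap_image hf (hemb.measurable hB), Set.image_preimage_eq_inter_range]

variable {G : Type*} [NormedAddCommGroup G] [NormedSpace ℝ G] {B : Set (WithLp 2 (E × ℝ))}

theorem setIntegral_range_graphMap_inter (hf : LipschitzWith K f) (hB : MeasurableSet B)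
    (F : WithLp 2 (E × ℝ) → G) :
    ∫ x in Set.range (graphMap f) ∩ B, F x ∂μH[Module.finrank ℝ E] =
      ∫ y in graphMap f ⁻¹' B, graphJacobian (fderiv ℝ f y) • F (graphMap f y)
        ∂μH[Module.finrank ℝ E] := by
  have hemb := (isClosedEmbedding_graphMap hf.continuous).measurableEmbedding
  rw [Set.inter_comm, ← Measure.restrict_restrict hB, hausdorffMeasure_restrict_range_graphMap hf,
    hemb.restrict_map, hemb.integral_map, restrict_withDensity (hemb.measurable hB),
    integral_withDensity_eq_integral_toReal_smul
      (measurable_graphJacobian_fderiv f).ennreal_ofReal (by simp)]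
  simp only [ENNReal.toReal_ofReal (graphJacobian_pos _).le]

theorem integrableOn_range_graphMap_inter_iff (hf : LipschitzWith K f) (hB : MeasurableSet B)
    (F : WithLp 2 (E × ℝ) → G) :
    IntegrableOn F (Set.range (graphMap f) ∩ B) μH[Module.finrank ℝ E] ↔
      IntegrableOn (fun y ↦ graphJacobian (fderiv ℝ f y) • F (graphMap f y))
        (graphMap f ⁻¹' B) μH[Module.finrank ℝ E] := by
  have hemb := (isClosedEmbedding_graphMap hf.continuous).measurableEmbedding
  rw [IntegrableOn, Set.inter_comm, ← Measure.restrict_restrict hB,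
    hausdorffMeasure_restrict_range_graphMap hf,
    hemb.restrict_map, hemb.integrable_map_iff, restrict_withDensity (hemb.measurable hB),
    integrable_withDensity_iff_integrable_smul'
      (measurable_graphJacobian_fderiv f).ennreal_ofReal (by simp)]
  simp only [ENNReal.toReal_ofReal (graphJacobian_pos _).le, Function.comp_apply, IntegrableOn]

theorem ae_restrict_range_graphMap_inter_iff (hf : LipschitzWith K f) (hB : MeasurableSet B)
    {q : WithLp 2 (E × ℝ) → Prop} :
    (∀ᵐ x ∂(μH[Module.finrank ℝ E] : Measure (WithLp 2 (E × ℝ))).restrict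
      (Set.range (graphMap f) ∩ B), q x) ↔
      ∀ᵐ y ∂(μH[Module.finrank ℝ E] : Measure E).restrict (graphMap f ⁻¹' B),
        q (graphMap f y) := by
  have hemb := (isClosedEmbedding_graphMap hf.continuous).measurableEmbedding
  rw [Set.inter_comm, ← Measure.restrict_restrict hB, hausdorffMeasure_restrict_range_graphMap hf,
    hemb.restrict_map, hemb.ae_map_iff, restrict_withDensity (hemb.measurable hB),
    ae_withDensity_iff (measurable_graphJacobian_fderiv f).ennreal_ofReal]
  simp [graphJacobian_pos]

end GraphIntegral

section WeakOutwardNormal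

variable {H : Type*} [NormedAddCommGroup H] [InnerProductSpace ℝ H]

/-- `v` is a unit vector and every direction making an obtuse angle with `v` points from `x` into
`Ω`. This is the half of `IsOutwardNormalAt` that determines `v` along a Lipschitz graph; it makes
sense in every inner product space. -/
def IsWeakOutwardNormalAt (Ω : Set H) (x v : H) : Prop :=
  ‖v‖ = 1 ∧ ∀ w : H, ⟪w, v⟫ < 0 → ∀ᶠ t in 𝓝[>] (0 : ℝ), x + t • w ∈ Ω

theorem IsOutwardNormalAt.isWeakOutwardNormalAt {n : ℕ} {Ω : Set (EuclideanSpace ℝ (Fin n))}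
    {x v : EuclideanSpace ℝ (Fin n)} (h : IsOutwardNormalAt Ω x v) :
    IsWeakOutwardNormalAt Ω x v :=
  ⟨h.1, fun w ↦ (h.2 w).1⟩

theorem eq_norm_smul_of_inner_nonpos {N v : H} (hv : ‖v‖ = 1)
    (h : ∀ w : H, ⟪w, v⟫ < 0 → ⟪N, w⟫ ≤ 0) : N = ‖N‖ • v := by
  have hvv : ⟪v, v⟫ = (1 : ℝ) := by rw [real_inner_self_eq_norm_sq, hv, one_pow]
  have hc : 0 ≤ ⟪N, v⟫ := by
    simpa [inner_neg_right] using h (-v) (by rw [inner_neg_left, hvv]; norm_num)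
  have hperp : ⟪N - ⟪N, v⟫ • v, v⟫ = (0 : ℝ) := by
    rw [inner_sub_left, real_inner_smul_left, hvv, mul_one, sub_self]
  have hle : ∀ s > 0, ‖N - ⟪N, v⟫ • v‖ ^ 2 ≤ s * ⟪N, v⟫ := by
    intro s hs
    have hobtuse := h (N - ⟪N, v⟫ • v - s • v) (by
      rw [inner_sub_left, hperp, real_inner_smul_left, hvv]
      linarith)
    have hsq : ⟪N, N - ⟪N, v⟫ • v⟫ = ‖N - ⟪N, v⟫ • v‖ ^ 2 := by
      rw [← real_inner_self_eq_norm_sq, inner_sub_left, real_inner_smul_left,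
        real_inner_comm _ v, hperp, mul_zero, sub_zero]
    rw [inner_sub_right, real_inner_smul_right, hsq] at hobtuse
    linarith
  have hzero : ‖N - ⟪N, v⟫ • v‖ ^ 2 ≤ 0 := by
    have hlim : Tendsto (fun s : ℝ ↦ s * ⟪N, v⟫) (𝓝[>] 0) (𝓝 0) := by
      have hcont : Continuous fun s : ℝ ↦ s * ⟪N, v⟫ := by fun_prop
      simpa using (hcont.tendsto 0).mono_left nhdsWithin_le_nhds
    exact ge_of_tendsto hlim (eventually_mem_nhdsWithin.mono hle)
  have heq : N = ⟪N, v⟫ • v :=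
    sub_eq_zero.1 (norm_eq_zero.1 (pow_eq_zero_iff two_ne_zero |>.1 (hzero.antisymm (sq_nonneg _))))
  have hnorm : ‖N‖ = ⟪N, v⟫ := by
    conv_lhs => rw [heq]
    rw [norm_smul, hv, mul_one, Real.norm_of_nonneg hc]
  rwa [hnorm]

end WeakOutwardNormal

section Conormal

variable {E : Type*} [NormedAddCommGroup E]

/-- The region strictly above the graph of `f`. -/
def supergraph (f : E → ℝ) : Set (WithLp 2 (E × ℝ)) := {x | f x.fst < x.snd}

theorem isOpen_supergraph {f : E → ℝ} (hf : Continuous f) : IsOpen (supergraph f) :=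
  isOpen_lt (hf.comp (WithLp.continuous_fst 2 E ℝ)) (WithLp.continuous_snd 2 E ℝ)

variable [InnerProductSpace ℝ E]

theorem fderiv_le_of_eventually_mem_supergraph {f : E → ℝ} {y : E} (hf : DifferentiableAt ℝ f y)
    {w : WithLp 2 (E × ℝ)}
    (hw : ∀ᶠ t in 𝓝[>] (0 : ℝ), graphMap f y + t • w ∈ supergraph f) :
    fderiv ℝ f y w.fst ≤ w.snd := by
  have hline : HasDerivAt (fun t : ℝ ↦ y + t • w.fst) w.fst 0 := by
    simpa using ((hasDerivAt_id (0 : ℝ)).smul_const w.fst).const_add y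
  have hderiv : HasDerivAt (fun t : ℝ ↦ f (y + t • w.fst)) (fderiv ℝ f y w.fst) 0 := by
    have hy : HasFDerivAt f (fderiv ℝ f y) (y + (0 : ℝ) • w.fst) := by simpa using hf.hasFDerivAt
    exact hy.comp_hasDerivAt (0 : ℝ) hline
  have hslope := (hasDerivAt_iff_tendsto_slope_zero.1 hderiv).mono_left
    (nhdsWithin_mono (0 : ℝ) (s := Set.Ioi 0) fun _ ht ↦ ne_of_gt ht)
  simp only [zero_add, zero_smul, add_zero] at hslope
  refine le_of_tendsto hslope ?_
  filter_upwards [hw, self_mem_nhdsWithin] with t hmem (ht : 0 < t)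
  have hlt : f (y + t • w.fst) < f y + t * w.snd := hmem
  rw [smul_eq_mul, inv_mul_le_iff₀ ht]
  linarith

variable [CompleteSpace E]

/-- The vector `(∇f, -1)`, where `L` is the differential of `f`: the outward normal to the
supergraph of `f`, not normalized. -/
def conormal (L : E →L[ℝ] ℝ) : WithLp 2 (E × ℝ) :=
  WithLp.toLp 2 ((InnerProductSpace.toDual ℝ E).symm L, -1)

theorem norm_conormal (L : E →L[ℝ] ℝ) : ‖conormal L‖ = graphJacobian L := by
  rw [WithLp.prod_norm_eq_of_L2, graphJacobian]
  simp [conormal, add_comm]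

theorem inner_conormal (L : E →L[ℝ] ℝ) (w : WithLp 2 (E × ℝ)) :
    ⟪conormal L, w⟫ = L w.fst - w.snd := by
  simp [conormal, WithLp.prod_inner_apply, sub_eq_add_neg]

theorem continuous_conormal : Continuous (conormal : (E →L[ℝ] ℝ) → WithLp 2 (E × ℝ)) :=
  (WithLp.prod_continuous_toLp 2 E ℝ).comp
    ((InnerProductSpace.toDual ℝ E).symm.continuous.prodMk continuous_const)

theorem conormal_eq_graphJacobian_smul {f : E → ℝ} {y : E} (hf : DifferentiableAt ℝ f y)
    {Ω : Set (WithLp 2 (E × ℝ))} (hΩ : ∀ᶠ x in 𝓝 (graphMap f y), x ∈ Ω → x ∈ supergraph f)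
    {v : WithLp 2 (E × ℝ)} (hv : IsWeakOutwardNormalAt Ω (graphMap f y) v) :
    conormal (fderiv ℝ f y) = graphJacobian (fderiv ℝ f y) • v := by
  rw [← norm_conormal]
  refine eq_norm_smul_of_inner_nonpos hv.1 fun w hw ↦ ?_
  have hray : Tendsto (fun t : ℝ ↦ graphMap f y + t • w) (𝓝[>] 0) (𝓝 (graphMap f y)) := by
    have hcont : Continuous fun t : ℝ ↦ graphMap f y + t • w := by fun_prop
    simpa using (hcont.tendsto 0).mono_left nhdsWithin_le_nhds
  have hle := fderiv_le_of_eventually_mem_supergraph hf (w := w)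
    (((hray.eventually hΩ).and (hv.2 w hw)).mono fun _ ht ↦ ht.1 ht.2)
  rw [inner_conormal]
  linarith

end Conormal

section UniformlyDistributed

variable {X : Type*} [MetricSpace X] [CompactSpace X] [MeasurableSpace X] [BorelSpace X]
  {μ ν : Measure X} [IsFiniteMeasure μ] [IsFiniteMeasure ν] {r a b : ℝ} {u : X → ℝ}

theorem setIntegral_dist_lt_comp_fst (hν : ∀ x, ν.real (ball x r) = b) (hu : Integrable u μ) :
    ∫ z in {z : X × X | dist z.1 z.2 < r}, u z.1 ∂μ.prod ν = b * ∫ x, u x ∂μ := by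
  have hmeas : MeasurableSet {z : X × X | dist z.1 z.2 < r} :=
    measurableSet_lt (by fun_prop) measurable_const
  have hslice : ∀ x y, Set.indicator {z : X × X | dist z.1 z.2 < r} (fun z ↦ u z.1) (x, y) =
      Set.indicator (ball x r) (fun _ ↦ u x) y := by
    classical
    intro x y
    simp only [Set.indicator_apply, Set.mem_ofPred_eq, mem_ball, dist_comm]
  rw [← integral_indicator hmeas, integral_prod _ ((hu.comp_fst ν).indicator hmeas),
    ← integral_const_mul]
  congr 1 with x
  simp only [hslice, integral_indicator measurableSet_ball, setIntegral_const, hν, smul_eq_mul]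

theorem setIntegral_dist_lt_comp_snd (hμ : ∀ x, μ.real (ball x r) = a) (hu : Integrable u ν) :
    ∫ z in {z : X × X | dist z.1 z.2 < r}, u z.2 ∂μ.prod ν = a * ∫ x, u x ∂ν := by
  have hmeas : MeasurableSet {z : X × X | dist z.1 z.2 < r} :=
    measurableSet_lt (by fun_prop) measurable_const
  have hslice : ∀ x y, Set.indicator {z : X × X | dist z.1 z.2 < r} (fun z ↦ u z.2) (x, y) =
      Set.indicator (ball y r) (fun _ ↦ u y) x := by
    classical
    intro x y
    simp only [Set.indicator_apply, Set.mem_ofPred_eq, mem_ball]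
  rw [← integral_indicator hmeas, integral_prod_symm _ ((hu.comp_snd μ).indicator hmeas),
    ← integral_const_mul]
  congr 1 with y
  simp only [hslice, integral_indicator measurableSet_ball, setIntegral_const, hμ, smul_eq_mul]

theorem mul_measureReal_univ_eq_of_ball (hμ : ∀ x, μ.real (ball x r) = a)
    (hν : ∀ x, ν.real (ball x r) = b) :
    b * μ.real Set.univ = a * ν.real Set.univ := by
  have hfst := setIntegral_dist_lt_comp_fst hν (integrable_const (μ := μ) (1 : ℝ))
  have hsnd := setIntegral_dist_lt_comp_snd hμ (integrable_const (μ := ν) (1 : ℝ))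
  simp only [integral_const, smul_eq_mul, mul_one] at hfst hsnd
  rw [← hfst, ← hsnd]

theorem abs_mul_integral_sub_mul_integral_le {η : ℝ} (hμ : ∀ x, μ.real (ball x r) = a)
    (hν : ∀ x, ν.real (ball x r) = b) (huμ : Integrable u μ) (huν : Integrable u ν)
    (hη : ∀ x y, dist x y < r → dist (u x) (u y) ≤ η) :
    |b * ∫ x, u x ∂μ - a * ∫ x, u x ∂ν| ≤ η * (b * μ.real Set.univ) := by
  have hmass := setIntegral_dist_lt_comp_fst hν (integrable_const (μ := μ) (1 : ℝ))
  simp only [integral_const, smul_eq_mul, mul_one, measureReal_restrict_apply_univ] at hmass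
  rw [← setIntegral_dist_lt_comp_fst hν huμ, ← setIntegral_dist_lt_comp_snd hμ huν,
    ← integral_sub (huμ.comp_fst ν).integrableOn (huν.comp_snd μ).integrableOn, ← hmass,
    ← Real.norm_eq_abs]
  refine norm_setIntegral_le_of_norm_le_const (measure_lt_top _ _) fun z hz ↦ ?_
  rw [← dist_eq_norm]
  exact hη z.1 z.2 hz

variable {g h : ℝ → ℝ}

theorem measureReal_univ_mul_integral_eq_of_uniformly_distributed
    (hμ : ∀ x, ∀ r > 0, μ.real (ball x r) = g r) (hν : ∀ x, ∀ r > 0, ν.real (ball x r) = h r)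
    (hpos : ∀ r > 0, 0 < h r) (hu : Continuous u) :
    ν.real Set.univ * ∫ x, u x ∂μ = μ.real Set.univ * ∫ x, u x ∂ν := by
  have hint : ∀ (ρ : Measure X) [IsFiniteMeasure ρ], Integrable u ρ := fun ρ _ ↦
    (BoundedContinuousFunction.mkOfCompact ⟨u, hu⟩).integrable ρ
  set M := μ.real Set.univ
  set N := ν.real Set.univ
  have hN : 0 ≤ N := measureReal_nonneg
  have hest : ∀ η > 0, |N * ∫ x, u x ∂μ - M * ∫ x, u x ∂ν| ≤ η * (M * N) := by
    intro η hη
    obtain ⟨r, hr, hur⟩ := Metric.uniformContinuous_iff.1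
      (CompactSpace.uniformContinuous_of_continuous hu) η hη
    have hle := abs_mul_integral_sub_mul_integral_le (fun x ↦ hμ x r hr) (fun x ↦ hν x r hr)
      (hint μ) (hint ν) fun x y hxy ↦ (hur hxy).le
    have hmass := mul_measureReal_univ_eq_of_ball (fun x ↦ hμ x r hr) (fun x ↦ hν x r hr)
    refine le_of_mul_le_mul_left ?_ (hpos r hr)
    calc h r * |N * ∫ x, u x ∂μ - M * ∫ x, u x ∂ν|
        = N * |h r * ∫ x, u x ∂μ - g r * ∫ x, u x ∂ν| := by
          rw [← abs_of_pos (hpos r hr), ← abs_mul, abs_of_pos (hpos r hr),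
            ← abs_of_nonneg hN, ← abs_mul, abs_of_nonneg hN]
          congr 1
          linear_combination (-∫ x, u x ∂ν) * hmass
      _ ≤ N * (η * (h r * M)) := by gcongr
      _ = h r * (η * (M * N)) := by ring
  have hlim : Tendsto (fun η : ℝ ↦ η * (M * N)) (𝓝[>] 0) (𝓝 0) := by
    have hcont : Continuous fun η : ℝ ↦ η * (M * N) := by fun_prop
    simpa using (hcont.tendsto 0).mono_left nhdsWithin_le_nhds
  have hzero := ge_of_tendsto hlim (eventually_mem_nhdsWithin.mono hest)
  exact sub_eq_zero.1 (abs_nonpos_iff.1 hzero)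

theorem measureReal_univ_mul_eq_of_uniformly_distributed
    (hμ : ∀ x, ∀ r > 0, μ.real (ball x r) = g r) (hν : ∀ x, ∀ r > 0, ν.real (ball x r) = h r)
    (hpos : ∀ r > 0, 0 < h r) (s : Set X) :
    ν.real Set.univ * μ.real s = μ.real Set.univ * ν.real s := by
  have hsmul : (ν Set.univ).toNNReal • μ = (μ Set.univ).toNNReal • ν := by
    refine ext_of_forall_integral_eq_of_IsFiniteMeasure fun f ↦ ?_
    rw [integral_smul_nnreal_measure, integral_smul_nnreal_measure]
    exact measureReal_univ_mul_integral_eq_of_uniformly_distributed hμ hν hpos f.continuous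
  have := congrArg (fun m : Measure X ↦ m.real s) hsmul
  simp only [measureReal_nnreal_smul_apply] at this
  exact this

end UniformlyDistributed

section SphereMeasure

open scoped Pointwise

variable {F : Type*} [NormedAddCommGroup F] [InnerProductSpace ℝ F]

theorem exists_linearIsometryEquiv_map_eq {x y : F} (h : ‖x‖ = ‖y‖) :
    ∃ R : F ≃ₗᵢ[ℝ] F, R x = y :=
  ⟨_, Submodule.reflection_sub h⟩

theorem exists_image_val_ball_eq (x y : sphere (0 : F) 1) (r : ℝ) :
    ∃ R : F ≃ₗᵢ[ℝ] F, Subtype.val '' ball y r = R '' (Subtype.val '' ball x r) := by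
  have himage (z : sphere (0 : F) 1) :
      Subtype.val '' ball z r = sphere (0 : F) 1 ∩ ball (z : F) r :=
    Subtype.image_preimage_val (sphere (0 : F) 1) (ball (z : F) r)
  obtain ⟨R, hR⟩ := exists_linearIsometryEquiv_map_eq
    (show ‖(x : F)‖ = ‖(y : F)‖ by rw [norm_eq_of_mem_sphere, norm_eq_of_mem_sphere])
  refine ⟨R, ?_⟩
  rw [himage, himage, Set.image_inter R.injective, R.image_sphere, R.image_ball, map_zero, hR]

theorem inter_sphere_eq_smul_image_val (A : Set F) {t : ℝ} (ht : 0 < t) :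
    A ∩ sphere 0 t = t • (Subtype.val '' {θ : sphere (0 : F) 1 | t • (θ : F) ∈ A}) := by
  ext v
  rw [Set.mem_smul_set_iff_inv_smul_mem₀ ht.ne']
  simp [norm_smul, abs_of_pos ht, ht.ne', inv_mul_eq_one₀, eq_comm (a := t), and_comm]

variable [MeasurableSpace F] [BorelSpace F]

theorem toSphere_real_ball_eq [FiniteDimensional ℝ F] (x y : sphere (0 : F) 1) (r : ℝ) :
    (volume : Measure F).toSphere.real (ball x r) =
      (volume : Measure F).toSphere.real (ball y r) := by
  obtain ⟨R, hR⟩ := exists_image_val_ball_eq x y r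
  rw [measureReal_def, measureReal_def, Measure.toSphere_apply' _ measurableSet_ball,
    Measure.toSphere_apply' _ measurableSet_ball, hR]
  have hsector : ∀ A : Set F, Set.Ioo (0 : ℝ) 1 • (R '' A) = R '' (Set.Ioo (0 : ℝ) 1 • A) :=
    fun A ↦ (Set.image_image2_distrib_right fun t v ↦ map_smul R t v).symm
  rw [hsector, R.image_eq_preimage_symm, R.symm.measurePreserving.measure_preimage_emb
    R.symm.toHomeomorph.measurableEmbedding]

theorem hausdorffMeasure_real_ball_sphere_eq {d : ℝ} (hd : 0 ≤ d) (x y : sphere (0 : F) 1)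
    (r : ℝ) : (μH[d] : Measure (sphere (0 : F) 1)).real (ball x r) = μH[d].real (ball y r) := by
  obtain ⟨R, hR⟩ := exists_image_val_ball_eq x y r
  rw [measureReal_def, measureReal_def,
    ← isometry_subtype_coe.hausdorffMeasure_image (Or.inl hd) (ball x r),
    ← isometry_subtype_coe.hausdorffMeasure_image (Or.inl hd) (ball y r), hR,
    R.isometry.hausdorffMeasure_image (Or.inl hd)]

theorem hausdorffMeasure_real_inter_sphere {d : ℝ} (hd : 0 ≤ d) (A : Set F) {t : ℝ} (ht : 0 < t) :
    (μH[d] (A ∩ sphere 0 t)).toReal =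
      t ^ d * (μH[d] : Measure (sphere (0 : F) 1)).real {θ | t • (θ : F) ∈ A} := by
  rw [inter_sphere_eq_smul_image_val A ht, Measure.hausdorffMeasure_smul₀ hd ht.ne',
    isometry_subtype_coe.hausdorffMeasure_image (Or.inl hd), ENNReal.smul_def, smul_eq_mul,
    ENNReal.toReal_mul, measureReal_def, ENNReal.coe_toReal, NNReal.coe_rpow, coe_nnnorm,
    Real.norm_of_nonneg ht.le]

variable {E : Type*} [NormedAddCommGroup E]

theorem graphMap_sqrt_one_sub_mem_sphere {y : E} (hy : ‖y‖ ≤ 1) :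
    graphMap (fun z ↦ √(1 - ‖z‖ ^ 2)) y ∈ sphere (0 : WithLp 2 (E × ℝ)) 1 := by
  rw [mem_sphere_zero_iff_norm, ← pow_eq_one_iff_of_nonneg (norm_nonneg _) two_ne_zero,
    WithLp.prod_norm_sq_eq_of_L2, graphMap_fst, graphMap_snd, Real.norm_eq_abs, sq_abs,
    Real.sq_sqrt (sub_nonneg.2 (pow_le_one₀ (norm_nonneg _) hy)), add_sub_cancel]

theorem graphMap_sqrt_one_sub_eq {x : WithLp 2 (E × ℝ)}
    (hx : x ∈ sphere (0 : WithLp 2 (E × ℝ)) 1) (hsnd : 0 ≤ x.snd) :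
    graphMap (fun z ↦ √(1 - ‖z‖ ^ 2)) x.fst = x := by
  have hnorm : ‖x‖ ^ 2 = 1 := by rw [mem_sphere_zero_iff_norm.1 hx, one_pow]
  rw [WithLp.prod_norm_sq_eq_of_L2, Real.norm_eq_abs, sq_abs] at hnorm
  refine WithLp.ofLp_injective 2 (Prod.ext rfl ?_)
  change √(1 - ‖x.fst‖ ^ 2) = x.snd
  rw [← hnorm, add_sub_cancel_left, Real.sqrt_sq hsnd]

variable [InnerProductSpace ℝ E] [FiniteDimensional ℝ E] [MeasurableSpace E] [BorelSpace E]

theorem finiteAt_hausdorffMeasure_sphere_pole :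
    (μH[Module.finrank ℝ E] : Measure (WithLp 2 (E × ℝ))).FiniteAtFilter
      (𝓝[sphere 0 1] WithLp.toLp 2 (0, 1)) := by
  have hchart : ContDiffAt ℝ 1 (graphMap fun z : E ↦ √(1 - ‖z‖ ^ 2)) 0 := by
    refine (WithLp.prodContinuousLinearEquiv 2 ℝ E ℝ).symm.contDiff.contDiffAt.comp 0
      (contDiffAt_id.prodMk (ContDiffAt.sqrt ?_ (by simp)))
    exact contDiffAt_const.sub (contDiff_norm_sq ℝ).contDiffAt
  obtain ⟨K, t, ht, hK⟩ := hchart.exists_lipschitzOnWith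
  set N : Set (WithLp 2 (E × ℝ)) := {x | x.fst ∈ t ∩ ball 0 1 ∧ 0 < x.snd}
  have hN : N ∈ 𝓝 (WithLp.toLp 2 ((0 : E), (1 : ℝ))) :=
    inter_mem ((WithLp.continuous_fst 2 E ℝ).continuousAt.preimage_mem_nhds
        (inter_mem ht (ball_mem_nhds _ one_pos)))
      ((WithLp.continuous_snd 2 E ℝ).continuousAt.preimage_mem_nhds
        (Ioi_mem_nhds (by simp)))
  refine ⟨sphere 0 1 ∩ N, inter_mem_nhdsWithin _ hN, ?_⟩
  have hsub : sphere 0 1 ∩ N ⊆ graphMap (fun z : E ↦ √(1 - ‖z‖ ^ 2)) '' (t ∩ ball 0 1) :=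
    fun x hx ↦ ⟨x.fst, hx.2.1, graphMap_sqrt_one_sub_eq hx.1 hx.2.2.le⟩
  calc μH[Module.finrank ℝ E] (sphere 0 1 ∩ N)
      ≤ (K : ℝ≥0∞) ^ (Module.finrank ℝ E : ℝ) * μH[Module.finrank ℝ E] (t ∩ ball (0 : E) 1) :=
        (measure_mono hsub).trans
          ((hK.mono Set.inter_subset_left).hausdorffMeasure_image_le (by positivity))
    _ < ∞ := ENNReal.mul_lt_top
        (ENNReal.rpow_lt_top_of_nonneg (by positivity) ENNReal.coe_ne_top)
        ((measure_mono Set.inter_subset_right).trans_lt measure_ball_lt_top)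

theorem hausdorffMeasure_sphere_lt_top :
    μH[Module.finrank ℝ E] (sphere (0 : WithLp 2 (E × ℝ)) 1) < ∞ := by
  obtain ⟨U, hU, hUfin⟩ := finiteAt_hausdorffMeasure_sphere_pole (E := E)
  refine (isCompact_sphere _ _).measure_lt_top_of_nhdsWithin fun x hx ↦ ?_
  obtain ⟨R, hR⟩ := exists_linearIsometryEquiv_map_eq
    (show ‖x‖ = ‖WithLp.toLp 2 ((0 : E), (1 : ℝ))‖ by simp [mem_sphere_zero_iff_norm.1 hx])
  refine ⟨R ⁻¹' U, ?_, (R.toIsometryEquiv.hausdorffMeasure_preimage _ U).trans_lt hUfin⟩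
  rw [← hR] at hU
  exact (R.continuous.continuousWithinAt.tendsto_nhdsWithin fun y hy ↦ by simpa using hy) hU

theorem hausdorffMeasure_sphere_pos :
    0 < μH[Module.finrank ℝ E] (sphere (0 : WithLp 2 (E × ℝ)) 1) := by
  have hlip : LipschitzWith 1 fun x : WithLp 2 (E × ℝ) ↦ x.fst := fun x y ↦ by
    simpa using WithLp.edist_fst_le x y
  have hsub : ball (0 : E) 1 ⊆ (fun x : WithLp 2 (E × ℝ) ↦ x.fst) '' sphere 0 1 :=
    fun y hy ↦ ⟨_, graphMap_sqrt_one_sub_mem_sphere (mem_ball_zero_iff.1 hy).le, rfl⟩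
  have hle := hlip.hausdorffMeasure_image_le (d := Module.finrank ℝ E) (by positivity) (sphere 0 1)
  rw [ENNReal.coe_one, ENNReal.one_rpow, one_mul] at hle
  exact (measure_ball_pos _ _ one_pos).trans_le ((measure_mono hsub).trans hle)

theorem hausdorffMeasure_inter_sphere_div_eq (Ω : Set (WithLp 2 (E × ℝ))) {t : ℝ} (ht : 0 < t) :
    (μH[Module.finrank ℝ E] (Ω ∩ sphere 0 t)).toReal /
        (μH[Module.finrank ℝ E] (sphere (0 : WithLp 2 (E × ℝ)) t)).toReal =
      (volume : Measure (WithLp 2 (E × ℝ))).toSphere.real {θ | t • (θ : WithLp 2 (E × ℝ)) ∈ Ω} /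
        (volume : Measure (WithLp 2 (E × ℝ))).toSphere.real Set.univ := by
  have hd : 0 ≤ (Module.finrank ℝ E : ℝ) := by positivity
  set τ := (volume : Measure (WithLp 2 (E × ℝ))).toSphere
  set σ : Measure (sphere (0 : WithLp 2 (E × ℝ)) 1) := μH[Module.finrank ℝ E]
  have hσuniv : σ Set.univ = μH[Module.finrank ℝ E] (sphere (0 : WithLp 2 (E × ℝ)) 1) := by
    rw [← isometry_subtype_coe.hausdorffMeasure_image (Or.inl hd), Set.image_univ,
      Subtype.range_coe]
  have : IsFiniteMeasure σ := ⟨hσuniv ▸ hausdorffMeasure_sphere_lt_top⟩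
  have hσpos : 0 < σ.real Set.univ :=
    ENNReal.toReal_pos (hσuniv ▸ hausdorffMeasure_sphere_pos.ne') (measure_ne_top _ _)
  let e : sphere (0 : WithLp 2 (E × ℝ)) 1 := ⟨WithLp.toLp 2 (0, 1), by simp⟩
  have hτball : ∀ r > 0, 0 < τ.real (ball e r) := fun r hr ↦
    ENNReal.toReal_pos (measure_ball_pos _ _ hr).ne' (measure_ne_top _ _)
  have hτpos : 0 < τ.real Set.univ :=
    (hτball 1 one_pos).trans_le (measureReal_mono (Set.subset_univ _))
  have hunique := measureReal_univ_mul_eq_of_uniformly_distributed (μ := σ) (ν := τ)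
    (fun x r _ ↦ hausdorffMeasure_real_ball_sphere_eq hd x e r)
    (fun x r _ ↦ toSphere_real_ball_eq x e r) hτball {θ | t • (θ : WithLp 2 (E × ℝ)) ∈ Ω}
  have hsphere := hausdorffMeasure_real_inter_sphere hd (Set.univ : Set (WithLp 2 (E × ℝ))) ht
  simp only [Set.univ_inter, Set.mem_univ, Set.ofPred_true] at hsphere
  rw [hausdorffMeasure_real_inter_sphere hd Ω ht, hsphere,
    mul_div_mul_left _ _ (Real.rpow_pos_of_pos ht _).ne', div_eq_div_iff hσpos.ne' hτpos.ne']
  linear_combination hunique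

end SphereMeasure

section Polar

theorem integral_volumeIoiPow {G : Type*} [NormedAddCommGroup G] [NormedSpace ℝ G] (n : ℕ)
    (g : ℝ → G) :
    ∫ t, g (t : ℝ) ∂Measure.volumeIoiPow n = ∫ t in Set.Ioi (0 : ℝ), t ^ n • g t := by
  simp only [Measure.volumeIoiPow, ENNReal.ofReal]
  rw [integral_withDensity_eq_integral_smul (measurable_subtype_coe.pow_const _).real_toNNReal,
    integral_subtype_comap measurableSet_Ioi fun t : ℝ ↦ (t ^ n).toNNReal • g t]
  refine setIntegral_congr_fun measurableSet_Ioi fun t ht ↦ ?_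
  simp only [NNReal.smul_def, Real.coe_toNNReal _ (pow_nonneg (le_of_lt ht) n)]

variable {F : Type*} [NormedAddCommGroup F] [NormedSpace ℝ F] [FiniteDimensional ℝ F]
  [MeasurableSpace F] [BorelSpace F]

theorem integrable_comp_norm (μ : Measure F) [IsFiniteMeasureOnCompacts μ] {h : ℝ → ℝ}
    (hh : Continuous h) {b : ℝ} (hb : ∀ t > b, h t = 0) : Integrable (fun x : F ↦ h ‖x‖) μ :=
  (hh.comp continuous_norm).integrable_of_hasCompactSupport <|
    .intro (isCompact_closedBall (0 : F) b) fun x hx ↦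
      hb _ (by simpa only [mem_closedBall_zero_iff, not_le] using hx)

theorem integral_eq_integral_Ioi_toSphere [Nontrivial F] (μ : Measure F) [μ.IsAddHaarMeasure]
    {u : F → ℝ} (hu : Integrable u μ) :
    ∫ x, u x ∂μ = ∫ t in Set.Ioi (0 : ℝ), t ^ (Module.finrank ℝ F - 1) *
      ∫ θ : sphere (0 : F) 1, u (t • (θ : F)) ∂μ.toSphere := by
  have hpolar := μ.measurePreserving_homeomorphUnitSphereProd
  have hemb := (homeomorphUnitSphereProd F).measurableEmbedding
  have hcomp : (fun z : sphere (0 : F) 1 × Set.Ioi (0 : ℝ) ↦ u (z.2.1 • (z.1 : F))) ∘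
      homeomorphUnitSphereProd F = fun x : ({0}ᶜ : Set F) ↦ u x := by
    ext ⟨x, hx⟩
    have hnorm : ‖x‖ ≠ 0 := norm_ne_zero_iff.2 hx
    simp [smul_smul, hnorm]
  have hint : Integrable (fun z : sphere (0 : F) 1 × Set.Ioi (0 : ℝ) ↦ u (z.2.1 • (z.1 : F)))
      (μ.toSphere.prod (Measure.volumeIoiPow (Module.finrank ℝ F - 1))) := by
    rw [← hpolar.integrable_comp_emb hemb, hcomp]
    exact (integrableOn_iff_comap_subtypeVal (measurableSet_singleton (0 : F)).compl).1
      hu.integrableOn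
  calc ∫ x, u x ∂μ
      = ∫ x : ({0}ᶜ : Set F), u x ∂μ.comap Subtype.val := by
        rw [integral_subtype_comap (measurableSet_singleton _).compl u, restrict_compl_singleton]
    _ = ∫ z, u (z.2.1 • (z.1 : F)) ∂μ.toSphere.prod (.volumeIoiPow (Module.finrank ℝ F - 1)) := by
        rw [← hpolar.integral_comp hemb]
        exact congrArg (integral _) hcomp.symm
    _ = _ := by
        rw [integral_prod_symm _ hint]
        exact integral_volumeIoiPow _ fun t ↦ ∫ θ : sphere (0 : F) 1, u (t • (θ : F)) ∂μ.toSphere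

end Polar

section AngularMeasure

open scoped Pointwise

variable {F : Type*} [NormedAddCommGroup F] [InnerProductSpace ℝ F] [FiniteDimensional ℝ F]
  [MeasurableSpace F] [BorelSpace F] {G : Set F}

/-- The measure of the set of directions in which the point at distance `t` from the origin lies
in `G`: the solid angle of the slice of `G` by the sphere of radius `t`. -/
def angularMeasure (G : Set F) (t : ℝ) : ℝ :=
  (volume : Measure F).toSphere.real {θ | t • (θ : F) ∈ G}

theorem measurable_angularMeasure (hG : MeasurableSet G) : Measurable (angularMeasure G) := by
  have hmeas : MeasurableSet {z : ℝ × sphere (0 : F) 1 | z.1 • (z.2 : F) ∈ G} :=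
    (by fun_prop : Measurable fun z : ℝ × sphere (0 : F) 1 ↦ z.1 • (z.2 : F)) hG
  exact (measurable_measure_prodMk_left (ν := (volume : Measure F).toSphere) hmeas).ennreal_toReal

theorem abs_angularMeasure_le (G : Set F) (t : ℝ) :
    |angularMeasure G t| ≤ (volume : Measure F).toSphere.real Set.univ := by
  rw [angularMeasure, abs_of_nonneg measureReal_nonneg]
  exact measureReal_mono (Set.subset_univ _)

theorem angularMeasure_smul {c : ℝ} (hc : c ≠ 0) (G : Set F) (t : ℝ) :
    angularMeasure (c • G) t = angularMeasure G (c⁻¹ * t) := by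
  simp only [angularMeasure, Set.mem_smul_set_iff_inv_smul_mem₀ hc, smul_smul]

theorem setIntegral_comp_norm [Nontrivial F] (hG : MeasurableSet G) {h : ℝ → ℝ}
    (hh : Integrable fun x : F ↦ h ‖x‖) :
    ∫ x in G, h ‖x‖ =
      ∫ t in Set.Ioi (0 : ℝ), t ^ (Module.finrank ℝ F - 1) * (h t * angularMeasure G t) := by
  rw [← integral_indicator hG, integral_eq_integral_Ioi_toSphere volume (hh.indicator hG)]
  refine setIntegral_congr_fun measurableSet_Ioi fun t (ht : 0 < t) ↦ ?_
  have hslice : (fun θ : sphere (0 : F) 1 ↦ G.indicator (fun x ↦ h ‖x‖) (t • (θ : F))) =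
      {θ : sphere (0 : F) 1 | t • (θ : F) ∈ G}.indicator fun _ ↦ h t := by
    classical
    ext θ
    simp [Set.indicator_apply, norm_smul, abs_of_pos ht]
  have hmeas : MeasurableSet {θ : sphere (0 : F) 1 | t • (θ : F) ∈ G} :=
    (measurable_subtype_coe.const_smul t) hG
  simp only [hslice]
  rw [integral_indicator hmeas, setIntegral_const, smul_eq_mul, mul_comm (h t), angularMeasure]

theorem continuous_div_pow_of_eq_zero {φ : ℝ → ℝ} (hφ : Continuous φ) {a : ℝ} (ha : 0 < a)
    (hφa : ∀ t < a, φ t = 0) (m : ℕ) : Continuous fun t ↦ φ t / t ^ m := by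
  refine continuous_iff_continuousAt.2 fun t ↦ ?_
  rcases lt_or_ge t a with ht | ht
  · refine (continuousAt_const (y := (0 : ℝ))).congr ?_
    filter_upwards [Iio_mem_nhds ht] with s hs
    rw [hφa s hs, zero_div]
  · exact hφ.continuousAt.div (by fun_prop) (pow_ne_zero _ (ha.trans_le ht).ne')

theorem setIntegral_smul_radial [Nontrivial F] (hG : MeasurableSet G) {φ : ℝ → ℝ}
    (hφ : Continuous φ) {a b : ℝ} (ha : 0 < a) (hφab : ∀ t, t ∉ Set.Icc a b → φ t = 0) {c : ℝ}
    (hc : 0 < c) :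
    ∫ x in c • G, φ ‖x‖ / ‖x‖ ^ Module.finrank ℝ F =
      ∫ t in Set.Ioi (0 : ℝ), t⁻¹ * (φ (c * t) * angularMeasure G t) := by
  have hint : Integrable fun x : F ↦ φ ‖x‖ / ‖x‖ ^ Module.finrank ℝ F :=
    integrable_comp_norm volume (h := fun t ↦ φ t / t ^ Module.finrank ℝ F) (b := b)
      (continuous_div_pow_of_eq_zero hφ ha (fun t ht ↦ hφab t fun h ↦ ht.not_ge h.1) _)
      fun t ht ↦ by rw [hφab t fun h ↦ ht.not_ge h.2, zero_div]
  have hsubst := integral_comp_mul_left_Ioi' (fun t ↦ t ^ (Module.finrank ℝ F - 1) *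
    (φ t / t ^ Module.finrank ℝ F * angularMeasure (c • G) t)) 0 hc
  rw [mul_zero] at hsubst
  rw [setIntegral_comp_norm (h := fun t ↦ φ t / t ^ Module.finrank ℝ F)
    (hG.const_smul₀ c) hint, ← hsubst, ← integral_smul]
  refine setIntegral_congr_fun measurableSet_Ioi fun t (ht : 0 < t) ↦ ?_
  have hpow : (c * t) ^ Module.finrank ℝ F = (c * t) ^ (Module.finrank ℝ F - 1) * (c * t) := by
    rw [← pow_succ, Nat.sub_add_cancel Module.finrank_pos]
  simp only [angularMeasure_smul hc.ne', inv_mul_cancel_left₀ hc.ne', hpow, smul_eq_mul]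
  field_simp

theorem deriv_eq_zero_of_notMem_isClosed {φ : ℝ → ℝ} {s : Set ℝ} (hs : IsClosed s)
    (hφ : ∀ t, t ∉ s → φ t = 0) {t : ℝ} (ht : t ∉ s) : deriv φ t = 0 :=
  image_eq_zero_of_notMem_tsupport fun hmem ↦
    ht (closure_minimal (Function.support_subset_iff'.2 hφ) hs (tsupport_deriv_subset hmem))

theorem hasDerivAt_inv_mul_comp_mul {φ : ℝ → ℝ} (hφ : Differentiable ℝ φ) {t : ℝ} (ht : t ≠ 0)
    (a c : ℝ) : HasDerivAt (fun c ↦ t⁻¹ * (φ (c * t) * a)) (deriv φ (c * t) * a) c := by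
  have hcomp := (hφ (c * t)).hasDerivAt.comp c (by simpa using (hasDerivAt_id c).mul_const t)
  refine ((hcomp.mul_const a).const_mul t⁻¹).congr_deriv ?_
  field_simp

theorem hasDerivAt_integral_comp_mul_left {A : ℝ → ℝ} (hA : Measurable A) {M : ℝ}
    (hAM : ∀ t, |A t| ≤ M) {φ : ℝ → ℝ} (hφ : ContDiff ℝ 1 φ) {a b : ℝ} (ha : 0 < a)
    (hφab : ∀ t, t ∉ Set.Icc a b → φ t = 0) :
    HasDerivAt (fun c ↦ ∫ t in Set.Ioi (0 : ℝ), t⁻¹ * (φ (c * t) * A t))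
      (∫ t in Set.Ioi (0 : ℝ), deriv φ t * A t) 1 := by
  have hφcs : HasCompactSupport φ := .intro isCompact_Icc hφab
  have hdφ : Continuous (deriv φ) := hφ.continuous_deriv le_rfl
  obtain ⟨C, hC⟩ := hφcs.deriv.exists_bound_of_continuous hdφ
  have hC0 : 0 ≤ C := (norm_nonneg _).trans (hC 0)
  have hM0 : 0 ≤ M := (abs_nonneg _).trans (hAM 0)
  have hmeas : ∀ c, Measurable fun t ↦ t⁻¹ * (φ (c * t) * A t) := fun c ↦ by
    have := hφ.continuous.measurable
    fun_prop
  have hint : Integrable fun t ↦ t⁻¹ * (φ (1 * t) * A t) := by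
    have hcont := continuous_div_pow_of_eq_zero hφ.continuous ha
      (fun t ht ↦ hφab t fun h ↦ ht.not_ge h.1) 1
    refine ((hcont.integrable_of_hasCompactSupport (.intro (K := Set.Icc a b) isCompact_Icc
      fun t ht ↦ by rw [hφab t ht, zero_div])).mul_bdd hA.aestronglyMeasurable
      (.of_forall hAM)).congr (.of_forall fun t ↦ ?_)
    ring_nf
  have hbound : ∀ t : ℝ, 0 < t → ∀ c ∈ Set.Ioo (1 / 2 : ℝ) 2,
      ‖deriv φ (c * t) * A t‖ ≤ (Set.Icc 0 (2 * b)).indicator (fun _ ↦ C * M) t := by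
    intro t ht c hc
    by_cases hct : c * t ∈ Set.Icc a b
    · have hmem : t ∈ Set.Icc 0 (2 * b) := ⟨ht.le, by nlinarith [hct.2, hc.1]⟩
      rw [Set.indicator_of_mem hmem, norm_mul]
      exact mul_le_mul (hC _) (hAM t) (norm_nonneg _) hC0
    · rw [deriv_eq_zero_of_notMem_isClosed isClosed_Icc hφab hct, zero_mul, norm_zero]
      exact Set.indicator_nonneg (fun _ _ ↦ mul_nonneg hC0 hM0) t
  have hpos : ∀ᵐ t ∂volume.restrict (Set.Ioi (0 : ℝ)), 0 < t := ae_restrict_mem measurableSet_Ioi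
  simpa only [one_mul] using (hasDerivAt_integral_of_dominated_loc_of_deriv_le
    (F' := fun c t ↦ deriv φ (c * t) * A t) (Ioo_mem_nhds (by norm_num) (by norm_num))
    (.of_forall fun c ↦ (hmeas c).aestronglyMeasurable) hint.integrableOn
    (by have := hdφ.measurable; fun_prop)
    (hpos.mono hbound)
    ((integrable_indicator_iff measurableSet_Icc).2
      (integrableOn_const measure_Icc_lt_top.ne)).integrableOn
    (hpos.mono fun t ht c _ ↦
      hasDerivAt_inv_mul_comp_mul (hφ.differentiable one_ne_zero) ht.ne' _ c)).2

end AngularMeasure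

section Dilation

open scoped Pointwise

theorem abs_apply_le_of_lipschitzWith {E : Type*} [SeminormedAddCommGroup E] {f : E → ℝ} {K : ℝ≥0}
    (hf : LipschitzWith K f) (y : E) : |f y| ≤ |f 0| + K * ‖y‖ := by
  have hdist := hf.norm_sub_le y 0
  rw [sub_zero] at hdist
  linarith [norm_sub_norm_le (f y) (f 0), Real.norm_eq_abs (f y), Real.norm_eq_abs (f 0)]

variable {E : Type*} [NormedAddCommGroup E] [NormedSpace ℝ E]

theorem smul_supergraph {c : ℝ} (hc : 0 < c) (f : E → ℝ) :
    c • supergraph f = supergraph fun y ↦ c * f (c⁻¹ • y) := by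
  ext x
  rw [Set.mem_smul_set_iff_inv_smul_mem₀ hc.ne']
  exact lt_inv_mul_iff₀ hc

theorem lipschitzOnWith_dilation {f : E → ℝ} {K : ℝ≥0} (hf : LipschitzWith K f) (y : E) :
    LipschitzOnWith (Real.nnabs (|f 0| + 4 * K * ‖y‖)) (fun c : ℝ ↦ c * f (c⁻¹ • y))
      (Set.Ioi (1 / 2)) := by
  refine LipschitzOnWith.of_dist_le_mul fun c (hc : 1 / 2 < c) e (he : 1 / 2 < e) ↦ ?_
  have hc₀ : 0 < c := by linarith
  have he₀ : 0 < e := by linarith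
  have hc₂ : c⁻¹ ≤ 2 := by rw [inv_le_comm₀ hc₀ two_pos]; linarith
  have hvalue : |f (c⁻¹ • y)| ≤ |f 0| + 2 * K * ‖y‖ := by
    refine (abs_apply_le_of_lipschitzWith hf _).trans ?_
    rw [norm_smul, Real.norm_of_nonneg (inv_nonneg.2 hc₀.le), ← mul_assoc, mul_comm (2 : ℝ)]
    gcongr
  have hincr : e * |f (c⁻¹ • y) - f (e⁻¹ • y)| ≤ 2 * K * ‖y‖ * |c - e| := by
    have hdist := hf.norm_sub_le (c⁻¹ • y) (e⁻¹ • y)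
    rw [← sub_smul, norm_smul, Real.norm_eq_abs, Real.norm_eq_abs] at hdist
    have hscale : e * |c⁻¹ - e⁻¹| = c⁻¹ * |c - e| := by
      rw [inv_sub_inv hc₀.ne' he₀.ne', abs_div, abs_of_pos (mul_pos hc₀ he₀), abs_sub_comm]
      field_simp
    calc e * |f (c⁻¹ • y) - f (e⁻¹ • y)| ≤ e * (K * (|c⁻¹ - e⁻¹| * ‖y‖)) := by gcongr
      _ = K * ‖y‖ * (e * |c⁻¹ - e⁻¹|) := by ring
      _ ≤ K * ‖y‖ * (2 * |c - e|) := by rw [hscale]; gcongr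
      _ = 2 * K * ‖y‖ * |c - e| := by ring
  have hB : 0 ≤ |f 0| + 4 * K * ‖y‖ := by positivity
  rw [Real.dist_eq, Real.dist_eq, Real.coe_nnabs, abs_of_nonneg hB]
  calc |c * f (c⁻¹ • y) - e * f (e⁻¹ • y)|
      = |(c - e) * f (c⁻¹ • y) + e * (f (c⁻¹ • y) - f (e⁻¹ • y))| := by ring_nf
    _ ≤ |c - e| * |f (c⁻¹ • y)| + e * |f (c⁻¹ • y) - f (e⁻¹ • y)| := by
      refine (abs_add_le _ _).trans_eq ?_
      rw [abs_mul, abs_mul, abs_of_pos he₀]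
    _ ≤ |c - e| * (|f 0| + 2 * K * ‖y‖) + 2 * K * ‖y‖ * |c - e| := by gcongr
    _ = (|f 0| + 4 * K * ‖y‖) * |c - e| := by ring

/-- At a point of differentiability, the product of `⟪x, n⟫` and the area density of the graph at
the point `x = graphMap f y`, where `n` is the unit normal of the graph pointing out of
`supergraph f`. -/
def graphSupport (f : E → ℝ) (y : E) : ℝ := fderiv ℝ f y y - f y

theorem hasDerivAt_dilation {f : E → ℝ} {y : E} (hf : DifferentiableAt ℝ f y) :
    HasDerivAt (fun c : ℝ ↦ c * f (c⁻¹ • y)) (-graphSupport f y) 1 := by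
  have hfy : HasFDerivAt f (fderiv ℝ f y) ((1 : ℝ)⁻¹ • y) := by simpa using hf.hasFDerivAt
  have hinv : HasDerivAt (fun c : ℝ ↦ c⁻¹ • y) (-y) 1 := by
    simpa using (hasDerivAt_inv (one_ne_zero (α := ℝ))).smul_const y
  refine ((hasDerivAt_id (1 : ℝ)).mul (hfy.comp_hasDerivAt 1 hinv)).congr_deriv ?_
  simp [graphSupport, sub_eq_add_neg]

theorem abs_graphSupport_le {f : E → ℝ} {K : ℝ≥0} (hf : LipschitzWith K f) (y : E) :
    |graphSupport f y| ≤ |f 0| + 2 * K * ‖y‖ := by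
  have hfderiv : |fderiv ℝ f y y| ≤ K * ‖y‖ := (fderiv ℝ f y).le_of_opNorm_le
    (norm_fderiv_le_of_lipschitz ℝ hf) y
  calc |graphSupport f y| ≤ |fderiv ℝ f y y| + |f y| := abs_sub _ _
    _ ≤ K * ‖y‖ + (|f 0| + K * ‖y‖) := add_le_add hfderiv (abs_apply_le_of_lipschitzWith hf y)
    _ = |f 0| + 2 * K * ‖y‖ := by ring

end Dilation

section Fiber

variable {E : Type*} [NormedAddCommGroup E]

theorem continuous_toLp_prodMk (y : E) :
    Continuous fun t : ℝ ↦ (WithLp.toLp 2 (y, t) : WithLp 2 (E × ℝ)) :=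
  (WithLp.prod_continuous_toLp 2 E ℝ).comp (.prodMk_right y)

theorem integrable_fiber_of_hasCompactSupport {u : WithLp 2 (E × ℝ) → ℝ} (hu : Continuous u)
    (hus : HasCompactSupport u) (y : E) : Integrable fun t : ℝ ↦ u (WithLp.toLp 2 (y, t)) := by
  obtain ⟨b, hb⟩ := hus.isCompact.isBounded.subset_closedBall 0
  refine (hu.comp (continuous_toLp_prodMk y)).integrable_of_hasCompactSupport <|
    .intro (isCompact_closedBall (0 : ℝ) b) fun t ht ↦ by_contra fun hmem ↦
      ht <| mem_closedBall_zero_iff.2 ?_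
  exact (WithLp.norm_snd_le E (WithLp.toLp 2 (y, t))).trans
    (mem_closedBall_zero_iff.1 (hb (subset_tsupport u hmem)))

theorem exists_forall_fst_notMem_closedBall_eq_zero {u : WithLp 2 (E × ℝ) → ℝ}
    (hus : HasCompactSupport u) :
    ∃ b, ∀ y t, y ∉ closedBall (0 : E) b → u (WithLp.toLp 2 (y, t)) = 0 := by
  obtain ⟨b, hb⟩ := hus.isCompact.isBounded.subset_closedBall 0
  exact ⟨b, fun y t hy ↦ image_eq_zero_of_notMem_tsupport fun hmem ↦
    hy <| mem_closedBall_zero_iff.2 <|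
      (WithLp.norm_fst_le E (WithLp.toLp 2 (y, t))).trans (mem_closedBall_zero_iff.1 (hb hmem))⟩

end Fiber

section FirstVariation

open scoped Pointwise

theorem hasDerivAt_integral_Ioi {u : ℝ → ℝ} (hu : Continuous u) (hui : Integrable u) (s : ℝ) :
    HasDerivAt (fun s ↦ ∫ t in Set.Ioi s, u t) (-u s) s := by
  have hsplit : (fun s ↦ ∫ t in Set.Ioi s, u t) =
      fun s ↦ (∫ t in Set.Ioi (0 : ℝ), u t) - ∫ t in (0 : ℝ)..s, u t := by
    funext s
    rw [← intervalIntegral.integral_Ioi_sub_Ioi' hui.integrableOn hui.integrableOn, sub_sub_cancel]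
  rw [hsplit]
  exact (hu.integral_hasStrictDerivAt 0 s).hasDerivAt.const_sub _

theorem lipschitzWith_integral_Ioi {u : ℝ → ℝ} (hu : Continuous u) (hui : Integrable u) {C : ℝ≥0}
    (hC : ∀ t, ‖u t‖ ≤ C) : LipschitzWith C fun s ↦ ∫ t in Set.Ioi s, u t :=
  lipschitzWith_of_nnnorm_deriv_le (fun s ↦ (hasDerivAt_integral_Ioi hu hui s).differentiableAt)
    fun s ↦ by
      rw [(hasDerivAt_integral_Ioi hu hui s).deriv, nnnorm_neg]
      exact hC s

variable {E : Type*} [NormedAddCommGroup E] [InnerProductSpace ℝ E] [FiniteDimensional ℝ E]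
  [MeasurableSpace E] [BorelSpace E]

theorem integrable_and_setIntegral_supergraph {f : E → ℝ} (hf : Continuous f)
    {u : WithLp 2 (E × ℝ) → ℝ} (hu : Integrable u) :
    Integrable (fun y ↦ ∫ s in Set.Ioi (f y), u (WithLp.toLp 2 (y, s))) ∧
      ∫ x in supergraph f, u x = ∫ y, ∫ s in Set.Ioi (f y), u (WithLp.toLp 2 (y, s)) := by
  have hpres := WithLp.volume_preserving_toLp E ℝ
  have hemb := (WithLp.homeomorphProd 2 E ℝ).symm.measurableEmbedding
  have hmeas := (isOpen_supergraph hf).measurableSet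
  have hint : Integrable (fun z : E × ℝ ↦ (supergraph f).indicator u (WithLp.toLp 2 z))
      (volume.prod volume) :=
    (hpres.integrable_comp_emb hemb).2 (hu.indicator hmeas)
  have hslice : ∀ y, ∫ s, (supergraph f).indicator u (WithLp.toLp 2 (y, s)) =
      ∫ s in Set.Ioi (f y), u (WithLp.toLp 2 (y, s)) := fun y ↦ by
    rw [← integral_indicator measurableSet_Ioi]
    rfl
  refine ⟨hint.integral_prod_left.congr (.of_forall hslice), ?_⟩
  rw [← integral_indicator hmeas, ← hpres.integral_comp hemb, Measure.volume_eq_prod,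
    integral_prod _ hint]
  exact integral_congr_ae (.of_forall hslice)

theorem hasDerivAt_setIntegral_supergraph {u : WithLp 2 (E × ℝ) → ℝ} (hu : Continuous u)
    (hus : HasCompactSupport u) {g : ℝ → E → ℝ} {g' B : E → ℝ} {c₀ : ℝ} {s : Set ℝ}
    (hs : s ∈ 𝓝 c₀) (hg : ∀ᶠ c in 𝓝 c₀, Continuous (g c)) (hB : Continuous B)
    (hgB : ∀ y, LipschitzOnWith (Real.nnabs (B y)) (g · y) s) (hg'm : Measurable g')
    (hg' : ∀ᵐ y, HasDerivAt (g · y) (g' y) c₀) :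
    HasDerivAt (fun c ↦ ∫ x in supergraph (g c), u x)
      (-∫ y, u (graphMap (g c₀) y) * g' y) c₀ := by
  obtain ⟨b, hub⟩ := exists_forall_fst_notMem_closedBall_eq_zero hus
  obtain ⟨C, hC⟩ := hus.exists_bound_of_continuous hu
  lift C to ℝ≥0 using (norm_nonneg _).trans (hC 0)
  have huy : ∀ y, Continuous fun t : ℝ ↦ u (WithLp.toLp 2 (y, t)) := fun y ↦
    hu.comp (continuous_toLp_prodMk y)
  have huyi := integrable_fiber_of_hasCompactSupport hu hus
  have hfubini : ∀ᶠ c in 𝓝 c₀, Integrable (fun y ↦ ∫ t in Set.Ioi (g c y), u (WithLp.toLp 2 (y, t)))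
      ∧ ∫ x in supergraph (g c), u x =
        ∫ y, ∫ t in Set.Ioi (g c y), u (WithLp.toLp 2 (y, t)) :=
    hg.mono fun c hc ↦
      integrable_and_setIntegral_supergraph hc (hu.integrable_of_hasCompactSupport hus)
  have hlip : ∀ y, LipschitzOnWith
      (Real.nnabs ((closedBall 0 b).indicator (fun y ↦ C * B y) y))
      (fun c ↦ ∫ t in Set.Ioi (g c y), u (WithLp.toLp 2 (y, t))) s := fun y ↦ by
    by_cases hy : y ∈ closedBall (0 : E) b
    · rw [Set.indicator_of_mem hy, map_mul, Real.nnabs_coe]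
      exact (lipschitzWith_integral_Ioi (huy y) (huyi y) fun t ↦ hC _).comp_lipschitzOnWith (hgB y)
    · simp only [hub y _ hy, integral_zero]
      exact (LipschitzWith.const' 0).lipschitzOnWith.weaken zero_le
  have hderiv : ∀ᵐ y, HasDerivAt (fun c ↦ ∫ t in Set.Ioi (g c y), u (WithLp.toLp 2 (y, t)))
      (-u (graphMap (g c₀) y) * g' y) c₀ :=
    hg'.mono fun y hy ↦ (hasDerivAt_integral_Ioi (huy y) (huyi y) _).comp c₀ hy
  rw [← integral_neg]
  simp only [← neg_mul]
  refine HasDerivAt.congr_of_eventuallyEq ?_ (hfubini.mono fun c hc ↦ hc.2)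
  refine (hasDerivAt_integral_of_dominated_loc_of_lip hs
    (hfubini.mono fun c hc ↦ hc.1.aestronglyMeasurable) hfubini.self_of_nhds.1 ?_
    (.of_forall hlip) ?_ hderiv).2
  · have hγ : Continuous (graphMap (g c₀)) :=
      (isClosedEmbedding_graphMap hg.self_of_nhds).continuous
    exact ((hu.comp hγ).neg.measurable.mul hg'm).aestronglyMeasurable
  · exact (integrable_indicator_iff measurableSet_closedBall).2
      ((continuous_const.mul hB).continuousOn.integrableOn_compact (isCompact_closedBall 0 b))

theorem measurable_graphSupport {f : E → ℝ} (hf : Continuous f) : Measurable (graphSupport f) := by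
  have heval : Continuous fun q : (E →L[ℝ] ℝ) × E ↦ q.1 q.2 := by fun_prop
  exact (heval.measurable.comp ((measurable_fderiv ℝ f).prodMk measurable_id)).sub hf.measurable

theorem hasDerivAt_setIntegral_smul_supergraph {f : E → ℝ} {K : ℝ≥0} (hf : LipschitzWith K f)
    {u : WithLp 2 (E × ℝ) → ℝ} (hu : Continuous u) (hus : HasCompactSupport u) :
    HasDerivAt (fun c : ℝ ↦ ∫ x in c • supergraph f, u x)
      (∫ y, u (graphMap f y) * graphSupport f y) 1 := by
  have hfc := hf.continuous
  have hderiv := hasDerivAt_setIntegral_supergraph hu hus (g := fun c y ↦ c * f (c⁻¹ • y))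
    (c₀ := 1) (Ioi_mem_nhds (by norm_num)) (.of_forall fun c ↦ by fun_prop)
    (by fun_prop) (lipschitzOnWith_dilation hf) (measurable_graphSupport hfc).neg
    (hf.ae_differentiableAt.mono fun y hy ↦ hasDerivAt_dilation hy)
  simp only [Pi.neg_apply, mul_neg, integral_neg, neg_neg, inv_one, one_smul, one_mul] at hderiv
  refine hderiv.congr_of_eventuallyEq ?_
  filter_upwards [lt_mem_nhds one_pos] with c hc
  rw [smul_supergraph hc]

end FirstVariation

section SmoothStep

theorem abs_integral_mul_sub_le {X : Type*} [MeasurableSpace X] {μ : Measure X} {w A : X → ℝ}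
    {A₀ η : ℝ} (hw₀ : ∀ x, 0 ≤ w x) (hwi : Integrable w μ) (hw : ∫ x, w x ∂μ = 1)
    (hwA : Integrable (fun x ↦ w x * A x) μ) (hA : ∀ x, w x ≠ 0 → |A x - A₀| ≤ η) :
    |(∫ x, w x * A x ∂μ) - A₀| ≤ η := by
  have hdiff : (∫ x, w x * A x ∂μ) - A₀ = ∫ x, w x * A x - w x * A₀ ∂μ := by
    rw [integral_sub hwA (hwi.mul_const A₀), integral_mul_const, hw, one_mul]
  have hbound : ∀ x, ‖w x * A x - w x * A₀‖ ≤ w x * η := fun x ↦ by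
    rw [← mul_sub, norm_mul, Real.norm_of_nonneg (hw₀ x)]
    rcases eq_or_ne (w x) 0 with hx | hx
    · simp only [hx, zero_mul, le_refl]
    · exact mul_le_mul_of_nonneg_left (hA x hx) (hw₀ x)
  calc |(∫ x, w x * A x ∂μ) - A₀| ≤ ∫ x, w x * η ∂μ := by
        rw [hdiff]
        exact norm_integral_le_of_norm_le (hwi.mul_const η) (.of_forall hbound)
    _ = η := by rw [integral_mul_const, hw, one_mul]

/-- A smooth monotone function rising from `0` to `1` on the interval `[c - δ, c]`, for `0 < δ`. -/
def smoothStep (c δ t : ℝ) : ℝ := Real.smoothTransition ((t - c) / δ + 1)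

variable {c δ t : ℝ}

theorem smoothStep_of_ge (hδ : 0 < δ) (ht : c ≤ t) : smoothStep c δ t = 1 :=
  Real.smoothTransition.one_of_one_le (by linarith [div_nonneg (sub_nonneg.2 ht) hδ.le])

theorem smoothStep_of_le (hδ : 0 < δ) (ht : t ≤ c - δ) : smoothStep c δ t = 0 := by
  have hle : (t - c) / δ ≤ -1 := by rw [div_le_iff₀ hδ]; linarith
  exact Real.smoothTransition.zero_of_nonpos (by linarith)

theorem contDiff_smoothStep (c δ : ℝ) : ContDiff ℝ 1 (smoothStep c δ) :=
  (Real.smoothTransition.contDiff (n := 1)).comp (by fun_prop)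

theorem smoothStep_mem_Icc (c δ t : ℝ) : smoothStep c δ t ∈ Set.Icc 0 1 :=
  ⟨Real.smoothTransition.nonneg _, Real.smoothTransition.le_one _⟩

theorem deriv_smoothStep_nonneg (c : ℝ) (hδ : 0 < δ) (t : ℝ) : 0 ≤ deriv (smoothStep c δ) t :=
  Monotone.deriv_nonneg fun s t hst ↦ Real.smoothTransition.monotone (by gcongr)

theorem deriv_smoothStep_of_notMem_Icc (hδ : 0 < δ) (ht : t ∉ Set.Icc (c - δ) c) :
    deriv (smoothStep c δ) t = 0 := by
  rw [Set.mem_Icc, not_and_or, not_le, not_le] at ht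
  rcases ht with ht | ht
  · have hzero : smoothStep c δ =ᶠ[𝓝 t] fun _ ↦ 0 := by
      filter_upwards [Iio_mem_nhds ht] with s hs using smoothStep_of_le hδ (le_of_lt hs)
    rw [hzero.deriv_eq, deriv_const]
  · have hone : smoothStep c δ =ᶠ[𝓝 t] fun _ ↦ 1 := by
      filter_upwards [Ioi_mem_nhds ht] with s hs using smoothStep_of_ge hδ (le_of_lt hs)
    rw [hone.deriv_eq, deriv_const]

theorem integrable_deriv_smoothStep (c : ℝ) (hδ : 0 < δ) : Integrable (deriv (smoothStep c δ)) :=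
  ((contDiff_smoothStep c δ).continuous_deriv le_rfl).integrable_of_hasCompactSupport <|
    .intro isCompact_Icc fun _ ht ↦ deriv_smoothStep_of_notMem_Icc hδ ht

theorem integral_Ioi_deriv_smoothStep (hδ : 0 < δ) (hδc : δ ≤ c) :
    ∫ t in Set.Ioi 0, deriv (smoothStep c δ) t = 1 := by
  have hdiff : Differentiable ℝ (smoothStep c δ) :=
    (contDiff_smoothStep c δ).differentiable one_ne_zero
  have htop : Tendsto (smoothStep c δ) atTop (𝓝 1) := tendsto_const_nhds.congr' <|
    (eventually_ge_atTop c).mono fun t ht ↦ (smoothStep_of_ge hδ ht).symm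
  rw [integral_Ioi_of_hasDerivAt_of_tendsto hdiff.continuous.continuousWithinAt
    (fun t _ ↦ (hdiff t).hasDerivAt) (integrable_deriv_smoothStep c hδ).integrableOn htop,
    smoothStep_of_le hδ (sub_nonneg.2 hδc), sub_zero]

theorem integrable_deriv_smoothStep_mul (c : ℝ) (hδ : 0 < δ) {A : ℝ → ℝ} (hA : Measurable A)
    {M : ℝ} (hAM : ∀ t, |A t| ≤ M) : Integrable fun t ↦ deriv (smoothStep c δ) t * A t :=
  (integrable_deriv_smoothStep c hδ).mul_bdd hA.aestronglyMeasurable (.of_forall hAM)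

theorem abs_integral_deriv_smoothStep_mul_sub_le (hδ : 0 < δ) (hδc : δ ≤ c) {A : ℝ → ℝ}
    (hA : Measurable A) {M : ℝ} (hAM : ∀ t, |A t| ≤ M) {A₀ η : ℝ}
    (hAη : ∀ t ∈ Set.Icc (c - δ) c, |A t - A₀| ≤ η) :
    |(∫ t in Set.Ioi 0, deriv (smoothStep c δ) t * A t) - A₀| ≤ η :=
  abs_integral_mul_sub_le (deriv_smoothStep_nonneg c hδ)
    (integrable_deriv_smoothStep c hδ).integrableOn (integral_Ioi_deriv_smoothStep hδ hδc)
    (integrable_deriv_smoothStep_mul c hδ hA hAM).integrableOn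
    fun t ht ↦ hAη t (not_imp_comm.1 (deriv_smoothStep_of_notMem_Icc hδ) ht)

theorem tendsto_smoothStep (c t : ℝ) :
    Tendsto (fun δ ↦ smoothStep c δ t) (𝓝[>] 0) (𝓝 ((Set.Ici c).indicator 1 t)) := by
  refine tendsto_const_nhds.congr' ?_
  rcases le_or_gt c t with ht | ht
  · filter_upwards [self_mem_nhdsWithin] with δ hδ
    rw [smoothStep_of_ge hδ ht, Set.indicator_of_mem (Set.mem_Ici.2 ht), Pi.one_apply]
  · filter_upwards [self_mem_nhdsWithin, nhdsWithin_le_nhds (Iio_mem_nhds (sub_pos.2 ht))]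
      with δ hδ (hδt : δ < c - t)
    rw [smoothStep_of_le hδ (by linarith), Set.indicator_of_notMem (s := Set.Ici c) ht.not_ge]

variable {a : ℝ}

theorem smoothStep_sub_smoothStep_of_notMem_Icc (hδ : 0 < δ) (hac : a ≤ c)
    (ht : t ∉ Set.Icc (a - δ) c) : smoothStep a δ t - smoothStep c δ t = 0 := by
  rw [Set.mem_Icc, not_and_or, not_le, not_le] at ht
  rcases ht with ht | ht
  · rw [smoothStep_of_le hδ ht.le, smoothStep_of_le hδ (by linarith), sub_zero]
  · rw [smoothStep_of_ge hδ (hac.trans ht.le), smoothStep_of_ge hδ ht.le, sub_self]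

theorem abs_smoothStep_sub_smoothStep_le (a c δ t : ℝ) :
    |smoothStep a δ t - smoothStep c δ t| ≤ 1 := by
  have ha := smoothStep_mem_Icc a δ t
  have hc := smoothStep_mem_Icc c δ t
  exact abs_sub_le_iff.2 ⟨by linarith [ha.2, hc.1], by linarith [ha.1, hc.2]⟩

theorem tendsto_smoothStep_sub_smoothStep (hac : a ≤ c) (t : ℝ) :
    Tendsto (fun δ ↦ smoothStep a δ t - smoothStep c δ t) (𝓝[>] 0)
      (𝓝 ((Set.Ico a c).indicator 1 t)) := by
  rw [← Set.Ici_sdiff_Ici, Set.indicator_sdiff (Set.Ici_subset_Ici.2 hac)]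
  exact (tendsto_smoothStep a t).sub (tendsto_smoothStep c t)

theorem tendsto_integral_smoothStep_sub_mul {X : Type*} [MeasurableSpace X] {μ : Measure X}
    {ρ : X → ℝ} (hρ : Measurable ρ) {a₀ : ℝ} (ha₀ : a₀ < a) (hac : a ≤ c) {F : X → ℝ}
    (hF : IntegrableOn F (ρ ⁻¹' Set.Icc a₀ c) μ) :
    Tendsto (fun δ ↦ ∫ x, (smoothStep a δ (ρ x) - smoothStep c δ (ρ x)) * F x ∂μ) (𝓝[>] 0)
      (𝓝 (∫ x in ρ ⁻¹' Set.Ico a c, F x ∂μ)) := by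
  set G := (ρ ⁻¹' Set.Icc a₀ c).indicator F with hG
  have hGi : Integrable G μ := hF.integrable_indicator (hρ measurableSet_Icc)
  have hlim : ∫ x in ρ ⁻¹' Set.Ico a c, F x ∂μ =
      ∫ x, (Set.Ico a c).indicator 1 (ρ x) * G x ∂μ := by
    rw [← integral_indicator (hρ measurableSet_Ico)]
    congr with x
    by_cases hx : ρ x ∈ Set.Ico a c
    · have hx₀ : x ∈ ρ ⁻¹' Set.Icc a₀ c := ⟨ha₀.le.trans hx.1, hx.2.le⟩
      rw [Set.indicator_of_mem hx, hG, Set.indicator_of_mem hx₀, Pi.one_apply, one_mul,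
        Set.indicator_of_mem (s := ρ ⁻¹' Set.Ico a c) hx]
    · rw [Set.indicator_of_notMem hx, zero_mul,
        Set.indicator_of_notMem (s := ρ ⁻¹' Set.Ico a c) hx]
  have happrox : ∀ᶠ δ in 𝓝[>] (0 : ℝ),
      ∫ x, (smoothStep a δ (ρ x) - smoothStep c δ (ρ x)) * G x ∂μ =
        ∫ x, (smoothStep a δ (ρ x) - smoothStep c δ (ρ x)) * F x ∂μ := by
    filter_upwards [Ioo_mem_nhdsGT (sub_pos.2 ha₀)] with δ hδ
    congr with x
    by_cases hx : x ∈ ρ ⁻¹' Set.Icc a₀ c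
    · rw [hG, Set.indicator_of_mem hx]
    · rw [smoothStep_sub_smoothStep_of_notMem_Icc hδ.1 hac
        fun h ↦ hx ⟨by linarith [h.1, hδ.2], h.2⟩, zero_mul, zero_mul]
  rw [hlim]
  refine Tendsto.congr' happrox <| tendsto_integral_filter_of_dominated_convergence (‖G ·‖)
    (.of_forall fun δ ↦ ?_) (.of_forall fun δ ↦ .of_forall fun x ↦ ?_) hGi.norm
    (.of_forall fun x ↦ (tendsto_smoothStep_sub_smoothStep hac _).mul_const _)
  · have hstep := ((contDiff_smoothStep a δ).sub (contDiff_smoothStep c δ)).continuous.measurable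
    exact (hstep.comp hρ).aestronglyMeasurable.mul hGi.aestronglyMeasurable
  · rw [norm_mul]
    exact mul_le_of_le_one_left (norm_nonneg _) (abs_smoothStep_sub_smoothStep_le a c δ _)

end SmoothStep

section ImproperIntegral

variable {X : Type*} [MeasurableSpace X] {μ : Measure X} {ρ F : X → ℝ} {b : ℝ}

theorem exists_tendsto_setIntegral_preimage_Ico (hρ : Measurable ρ) (hb : 0 < b)
    (hF : ∀ a > 0, IntegrableOn F (ρ ⁻¹' Set.Ico a b) μ)
    (hsmall : ∀ η > 0, ∃ b₀ > 0, ∀ s t, 0 < s → s ≤ t → t < b₀ →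
      |∫ x in ρ ⁻¹' Set.Ico s t, F x ∂μ| ≤ η) :
    ∃ I, Tendsto (fun ε ↦ ∫ x in ρ ⁻¹' Set.Ico ε b, F x ∂μ) (𝓝[>] 0) (𝓝 I) := by
  refine cauchy_map_iff_exists_tendsto.1 (Metric.cauchy_iff.2 ⟨inferInstance, fun η hη ↦ ?_⟩)
  obtain ⟨b₀, hb₀, hle⟩ := hsmall (η / 2) (half_pos hη)
  refine ⟨_, image_mem_map (Ioo_mem_nhdsGT (lt_min hb hb₀)), ?_⟩
  have hdist : ∀ s ∈ Set.Ioo 0 (min b b₀), ∀ t ∈ Set.Ioo 0 (min b b₀), s ≤ t →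
      dist (∫ x in ρ ⁻¹' Set.Ico s b, F x ∂μ) (∫ x in ρ ⁻¹' Set.Ico t b, F x ∂μ) < η := by
    intro s hs t ht hst
    have htb : t ≤ b := (lt_min_iff.1 ht.2).1.le
    have hsplit : ρ ⁻¹' Set.Ico s b = ρ ⁻¹' Set.Ico s t ∪ ρ ⁻¹' Set.Ico t b := by
      rw [← Set.preimage_union, Set.Ico_union_Ico_eq_Ico hst htb]
    have hdisj : Disjoint (ρ ⁻¹' Set.Ico s t) (ρ ⁻¹' Set.Ico t b) :=
      (Set.Ico_disjoint_Ico_same).preimage ρ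
    rw [hsplit, setIntegral_union hdisj (hρ measurableSet_Ico)
      ((hF s hs.1).mono_set (Set.preimage_mono (Set.Ico_subset_Ico_right htb))) (hF t ht.1),
      dist_eq_norm, add_sub_cancel_right]
    exact (hle s t hs.1 hst (lt_min_iff.1 ht.2).2).trans_lt (half_lt_self hη)
  rintro _ ⟨s, hs, rfl⟩ _ ⟨t, ht, rfl⟩
  rcases le_total s t with hst | hts
  · exact hdist s hs t ht hst
  · rw [dist_comm]
    exact hdist t ht s hs hts

theorem tendsto_setIntegral_preimage_Ico (hρ : Measurable ρ)
    (hF : IntegrableOn F (ρ ⁻¹' Set.Ioo 0 b) μ) :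
    Tendsto (fun ε ↦ ∫ x in ρ ⁻¹' Set.Ico ε b, F x ∂μ) (𝓝[>] 0)
      (𝓝 (∫ x in ρ ⁻¹' Set.Ioo 0 b, F x ∂μ)) := by
  have hcover : AECover (μ.restrict (ρ ⁻¹' Set.Ioo 0 b)) (𝓝[>] (0 : ℝ))
      fun ε ↦ ρ ⁻¹' Set.Ici ε :=
    { ae_eventually_mem := by
        filter_upwards [ae_restrict_mem (hρ measurableSet_Ioo)] with x hx
        filter_upwards [Ioo_mem_nhdsGT hx.1] with ε hε using hε.2.le
      measurableSet := fun ε ↦ hρ measurableSet_Ici }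
  refine (hcover.integral_tendsto_of_countably_generated hF).congr' ?_
  filter_upwards [self_mem_nhdsWithin] with ε (hε : 0 < ε)
  rw [Measure.restrict_restrict (hρ measurableSet_Ici), ← Set.preimage_inter]
  congr 3
  ext t
  simp only [Set.mem_inter_iff, Set.mem_Ici, Set.mem_Ioo, Set.mem_Ico]
  grind

end ImproperIntegral

section NormGraphMap

variable {E : Type*} [NormedAddCommGroup E] {f : E → ℝ}

theorem continuous_norm_graphMap (hf : Continuous f) : Continuous fun y ↦ ‖graphMap f y‖ :=
  (isClosedEmbedding_graphMap hf).continuous.norm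

theorem isCompact_preimage_norm_graphMap_Icc [NormedSpace ℝ E] [FiniteDimensional ℝ E]
    (hf : Continuous f) (a b : ℝ) :
    IsCompact ((fun y ↦ ‖graphMap f y‖) ⁻¹' Set.Icc a b) := by
  have hannulus : IsCompact (norm ⁻¹' Set.Icc a b : Set (WithLp 2 (E × ℝ))) :=
    (isCompact_closedBall 0 b).of_isClosed_subset (isClosed_Icc.preimage continuous_norm)
      fun x hx ↦ mem_closedBall_zero_iff.2 hx.2
  exact (isClosedEmbedding_graphMap hf).isCompact_preimage hannulus

end NormGraphMap

section SolidAngle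

variable {E : Type*} [NormedAddCommGroup E] [InnerProductSpace ℝ E] [FiniteDimensional ℝ E]
  [MeasurableSpace E] [BorelSpace E] {f : E → ℝ} {K : ℝ≥0}

theorem integral_mul_graphSupport_eq_integral_deriv_mul_angularMeasure (hf : LipschitzWith K f)
    {φ : ℝ → ℝ} (hφ : ContDiff ℝ 1 φ) {a b : ℝ} (ha : 0 < a)
    (hφab : ∀ t, t ∉ Set.Icc a b → φ t = 0) :
    ∫ y, φ ‖graphMap f y‖ / ‖graphMap f y‖ ^ Module.finrank ℝ (WithLp 2 (E × ℝ)) *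
        graphSupport f y =
      ∫ t in Set.Ioi (0 : ℝ), deriv φ t * angularMeasure (supergraph f) t := by
  have : Nontrivial (WithLp 2 (E × ℝ)) :=
    (WithLp.linearEquiv 2 ℝ (E × ℝ)).toEquiv.nontrivial
  have hmeas := (isOpen_supergraph hf.continuous).measurableSet
  have hu : Continuous fun x : WithLp 2 (E × ℝ) ↦
      φ ‖x‖ / ‖x‖ ^ Module.finrank ℝ (WithLp 2 (E × ℝ)) :=
    (continuous_div_pow_of_eq_zero hφ.continuous ha
      (fun t ht ↦ hφab t fun h ↦ ht.not_ge h.1) _).comp continuous_norm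
  have hus : HasCompactSupport fun x : WithLp 2 (E × ℝ) ↦
      φ ‖x‖ / ‖x‖ ^ Module.finrank ℝ (WithLp 2 (E × ℝ)) :=
    .intro (isCompact_closedBall 0 b) fun x hx ↦ by
      rw [hφab _ fun h ↦ hx (mem_closedBall_zero_iff.2 h.2), zero_div]
  have hpolar := hasDerivAt_integral_comp_mul_left (measurable_angularMeasure hmeas)
    (abs_angularMeasure_le (supergraph f)) hφ ha hφab
  refine (hasDerivAt_setIntegral_smul_supergraph hf hu hus).unique
    (hpolar.congr_of_eventuallyEq ?_)
  filter_upwards [lt_mem_nhds one_pos] with c hc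
  exact setIntegral_smul_radial hmeas hφ.continuous ha hφab hc

theorem abs_integral_smoothStep_sub_mul_graphSupport_le (hf : LipschitzWith K f) {a c δ : ℝ}
    (hδ : 0 < δ) (hδa : δ < a) (hac : a ≤ c) {A₀ η : ℝ}
    (hA : ∀ t ∈ Set.Icc (a - δ) c, |angularMeasure (supergraph f) t - A₀| ≤ η) :
    |∫ y, (smoothStep a δ ‖graphMap f y‖ - smoothStep c δ ‖graphMap f y‖) /
      ‖graphMap f y‖ ^ Module.finrank ℝ (WithLp 2 (E × ℝ)) * graphSupport f y| ≤ 2 * η := by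
  have hAm := measurable_angularMeasure (isOpen_supergraph hf.continuous).measurableSet
  have hAM := abs_angularMeasure_le (supergraph f)
  have hderiv : ∀ t, deriv (fun t ↦ smoothStep a δ t - smoothStep c δ t) t =
      deriv (smoothStep a δ) t - deriv (smoothStep c δ) t := fun t ↦
    deriv_fun_sub ((contDiff_smoothStep a δ).differentiable one_ne_zero t)
      ((contDiff_smoothStep c δ).differentiable one_ne_zero t)
  have hinner := abs_integral_deriv_smoothStep_mul_sub_le hδ hδa.le hAm hAM
    fun t ht ↦ hA t ⟨ht.1, ht.2.trans hac⟩
  have houter := abs_integral_deriv_smoothStep_mul_sub_le hδ (hδa.le.trans hac) hAm hAM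
    fun t ht ↦ hA t ⟨by linarith [ht.1], ht.2⟩
  rw [integral_mul_graphSupport_eq_integral_deriv_mul_angularMeasure hf
    (φ := fun t ↦ smoothStep a δ t - smoothStep c δ t)
    ((contDiff_smoothStep a δ).sub (contDiff_smoothStep c δ)) (sub_pos.2 hδa)
    fun t ht ↦ smoothStep_sub_smoothStep_of_notMem_Icc hδ hac ht]
  simp only [hderiv, sub_mul]
  rw [integral_sub (integrable_deriv_smoothStep_mul a hδ hAm hAM).integrableOn
    (integrable_deriv_smoothStep_mul c hδ hAm hAM).integrableOn]
  rw [abs_le] at hinner houter ⊢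
  constructor <;> linarith [hinner.1, hinner.2, houter.1, houter.2]

theorem locallyIntegrable_graphSupport (hf : LipschitzWith K f) (μ : Measure E)
    [IsFiniteMeasureOnCompacts μ] : LocallyIntegrable (graphSupport f) μ := by
  have hbound : Continuous fun y : E ↦ |f 0| + 2 * K * ‖y‖ := by fun_prop
  refine hbound.locallyIntegrable.mono (measurable_graphSupport hf.continuous).aestronglyMeasurable
    (.of_forall fun y ↦ (abs_graphSupport_le hf y).trans (le_abs_self _))

theorem integrableOn_mul_graphSupport (hf : LipschitzWith K f) (μ : Measure E)
    [IsFiniteMeasureOnCompacts μ] {ψ : ℝ → ℝ} {a b : ℝ} (hψ : ContinuousOn ψ (Set.Icc a b)) :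
    IntegrableOn (fun y ↦ ψ ‖graphMap f y‖ * graphSupport f y)
      ((fun y ↦ ‖graphMap f y‖) ⁻¹' Set.Icc a b) μ := by
  have hcompact := isCompact_preimage_norm_graphMap_Icc hf.continuous a b
  exact ((locallyIntegrable_graphSupport hf μ).integrableOn_isCompact hcompact).continuousOn_mul
    (hψ.comp (continuous_norm_graphMap hf.continuous).continuousOn fun y hy ↦ hy) hcompact

theorem continuousOn_inv_pow_Icc {a : ℝ} (ha : 0 < a) (b : ℝ) (m : ℕ) :
    ContinuousOn (fun t : ℝ ↦ (t ^ m)⁻¹) (Set.Icc a b) :=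
  (continuousOn_pow m).inv₀ fun _ ht ↦ pow_ne_zero m (ha.trans_le ht.1).ne'

theorem abs_setIntegral_graphSupport_le (hf : LipschitzWith K f) {a b c : ℝ} (ha : 0 < a)
    (hac : a ≤ c) (hcb : c < b) {A₀ η : ℝ}
    (hA : ∀ t ∈ Set.Ioo 0 b, |angularMeasure (supergraph f) t - A₀| ≤ η) :
    |∫ y in (fun y ↦ ‖graphMap f y‖) ⁻¹' Set.Ico a c,
      (‖graphMap f y‖ ^ Module.finrank ℝ (WithLp 2 (E × ℝ)))⁻¹ * graphSupport f y| ≤ 2 * η := by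
  have hlim := tendsto_integral_smoothStep_sub_mul
    (continuous_norm_graphMap hf.continuous).measurable (half_lt_self ha) hac
    (integrableOn_mul_graphSupport hf volume (continuousOn_inv_pow_Icc (half_pos ha) c
      (Module.finrank ℝ (WithLp 2 (E × ℝ)))))
  refine le_of_tendsto hlim.abs ?_
  filter_upwards [Ioo_mem_nhdsGT ha] with δ hδ
  simp only [← mul_assoc, ← div_eq_mul_inv]
  exact abs_integral_smoothStep_sub_mul_graphSupport_le hf hδ.1 hδ.2 hac
    fun t ht ↦ hA t ⟨by linarith [ht.1, hδ.2], ht.2.trans_lt hcb⟩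

theorem exists_tendsto_setIntegral_inv_pow_mul_graphSupport (hf : LipschitzWith K f) {A₀ : ℝ}
    (hA : Tendsto (angularMeasure (supergraph f)) (𝓝[>] 0) (𝓝 A₀)) {b : ℝ} (hb : 0 < b) :
    ∃ I, Tendsto (fun ε ↦ ∫ y in (fun y ↦ ‖graphMap f y‖) ⁻¹' Set.Ico ε b,
      (‖graphMap f y‖ ^ Module.finrank ℝ (WithLp 2 (E × ℝ)))⁻¹ * graphSupport f y)
      (𝓝[>] 0) (𝓝 I) := by
  refine exists_tendsto_setIntegral_preimage_Ico
    (continuous_norm_graphMap hf.continuous).measurable hb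
    (fun a ha ↦ (integrableOn_mul_graphSupport hf volume (continuousOn_inv_pow_Icc ha b _)).mono_set
      (Set.preimage_mono Set.Ico_subset_Icc_self)) fun η hη ↦ ?_
  obtain ⟨b₀, hb₀, hclose⟩ := mem_nhdsGT_iff_exists_Ioo_subset.1
    (hA.eventually (closedBall_mem_nhds A₀ (half_pos hη)))
  refine ⟨b₀, hb₀, fun s t hs hst ht ↦ ?_⟩
  refine (abs_setIntegral_graphSupport_le hf hs hst ht fun t ht ↦ hclose ht).trans_eq ?_
  ring

theorem exists_tendsto_setIntegral_graph_principal_value (hf : LipschitzWith K f) (μ : Measure E)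
    [μ.IsAddHaarMeasure] {A₀ : ℝ}
    (hA : Tendsto (angularMeasure (supergraph f)) (𝓝[>] 0) (𝓝 A₀)) {b : ℝ} (hb : 0 < b) (R : ℝ) :
    ∃ I, Tendsto (fun ε ↦ ∫ y in (fun y ↦ ‖graphMap f y‖) ⁻¹' Set.Ico ε b,
      (1 - R / ‖graphMap f y‖ ^ Module.finrank ℝ (WithLp 2 (E × ℝ))) * graphSupport f y ∂μ)
      (𝓝[>] 0) (𝓝 I) := by
  obtain ⟨I, hI⟩ := exists_tendsto_setIntegral_inv_pow_mul_graphSupport hf hA hb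
  have hcompact := isCompact_preimage_norm_graphMap_Icc hf.continuous
  have hint := fun a ↦
    (locallyIntegrable_graphSupport hf volume).integrableOn_isCompact (hcompact a b)
  have hregular := tendsto_setIntegral_preimage_Ico
    (continuous_norm_graphMap hf.continuous).measurable
    ((hint 0).mono_set (Set.preimage_mono Set.Ioo_subset_Icc_self))
  obtain ⟨s, hs⟩ : ∃ s : ℝ≥0, μ = s • volume := ⟨_, μ.isAddLeftInvariant_eq_smul volume⟩
  refine ⟨_, ((hregular.sub (hI.const_mul R)).const_mul (s : ℝ)).congr' ?_⟩
  filter_upwards [self_mem_nhdsWithin] with ε hε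
  have hsub : (fun y ↦ ‖graphMap f y‖) ⁻¹' Set.Ico ε b ⊆
      (fun y ↦ ‖graphMap f y‖) ⁻¹' Set.Icc ε b := Set.preimage_mono Set.Ico_subset_Icc_self
  have hsingular := (integrableOn_mul_graphSupport hf volume
    (continuousOn_inv_pow_Icc hε b (Module.finrank ℝ (WithLp 2 (E × ℝ))))).mono_set hsub
  rw [hs, Measure.restrict_smul, integral_smul_nnreal_measure, ← integral_const_mul,
    ← integral_sub ((hint ε).mono_set hsub) (hsingular.const_mul R), NNReal.smul_def, smul_eq_mul]
  congr with y
  ring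

end SolidAngle

section LocalGraph

theorem mem_frontier_iff_of_eventually {X : Type*} [TopologicalSpace X] {s t : Set X} {x : X}
    (h : ∀ᶠ y in 𝓝 x, y ∈ s ↔ y ∈ t) : x ∈ frontier s ↔ x ∈ frontier t := by
  simp only [frontier_eq_closure_inter_closure, Set.mem_inter_iff, mem_closure_iff_frequently,
    Set.mem_compl_iff]
  rw [frequently_congr h, frequently_congr (h.mono fun y hy ↦ not_congr hy)]

theorem frontier_supergraph {E : Type*} [NormedAddCommGroup E] [NormedSpace ℝ E] {f : E → ℝ}
    (hf : Continuous f) : frontier (supergraph f) = Set.range (graphMap f) := by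
  refine Set.Subset.antisymm (fun x hx ↦ ?_) (Set.range_subset_iff.2 fun y ↦ ?_)
  · have heq := frontier_lt_subset_eq (hf.comp (WithLp.continuous_fst 2 E ℝ))
      (WithLp.continuous_snd 2 E ℝ) hx
    exact ⟨x.fst, WithLp.ofLp_injective 2 (Prod.ext rfl heq)⟩
  · rw [(isOpen_supergraph hf).frontier_eq]
    refine ⟨?_, lt_irrefl (f y)⟩
    have hray : Tendsto (fun t : ℝ ↦ graphMap f y + t • WithLp.toLp 2 ((0 : E), (1 : ℝ))) (𝓝[>] 0)
        (𝓝 (graphMap f y)) := by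
      have hcont : Continuous fun t : ℝ ↦ graphMap f y + t • WithLp.toLp 2 ((0 : E), (1 : ℝ)) := by
        fun_prop
      simpa using (hcont.tendsto 0).mono_left nhdsWithin_le_nhds
    refine mem_closure_of_tendsto hray ?_
    filter_upwards [self_mem_nhdsWithin] with t ht
    simpa [supergraph] using ht

variable {E : Type*} [NormedAddCommGroup E] [InnerProductSpace ℝ E] {f : E → ℝ}
  {Ω : Set (WithLp 2 (E × ℝ))} {b₀ : ℝ}

theorem frontier_inter_eq_range_graphMap_inter (hf : Continuous f)
    (hΩ : ∀ x ∈ ball (0 : WithLp 2 (E × ℝ)) b₀, x ∈ Ω ↔ x ∈ supergraph f)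
    {B : Set (WithLp 2 (E × ℝ))} (hB : B ⊆ ball 0 b₀) :
    frontier Ω ∩ B = Set.range (graphMap f) ∩ B := by
  ext x
  refine and_congr_left fun hx ↦ ?_
  rw [← frontier_supergraph hf]
  exact mem_frontier_iff_of_eventually
    (Filter.mem_of_superset (isOpen_ball.mem_nhds (hB hx)) hΩ)

variable [FiniteDimensional ℝ E] [MeasurableSpace E] [BorelSpace E] {K : ℝ≥0}

theorem tendsto_angularMeasure_of_hausdorffMeasure_sphere (hb₀ : 0 < b₀)
    (hΩ : ∀ x ∈ ball (0 : WithLp 2 (E × ℝ)) b₀, x ∈ Ω ↔ x ∈ supergraph f) {Γ : ℝ}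
    (hΓ : Tendsto (fun ε ↦ (μH[Module.finrank ℝ E] (Ω ∩ sphere 0 ε)).toReal /
      (μH[Module.finrank ℝ E] (sphere (0 : WithLp 2 (E × ℝ)) ε)).toReal) (𝓝[>] 0) (𝓝 Γ)) :
    Tendsto (angularMeasure (supergraph f)) (𝓝[>] 0)
      (𝓝 (Γ * (volume : Measure (WithLp 2 (E × ℝ))).toSphere.real Set.univ)) := by
  have : Nontrivial (WithLp 2 (E × ℝ)) :=
    (WithLp.linearEquiv 2 ℝ (E × ℝ)).toEquiv.nontrivial
  have huniv : (volume : Measure (WithLp 2 (E × ℝ))).toSphere.real Set.univ ≠ 0 := by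
    rw [Measure.toSphere_real_apply_univ]
    exact mul_ne_zero (Nat.cast_ne_zero.2 Module.finrank_pos.ne')
      (ENNReal.toReal_pos (measure_ball_pos _ _ one_pos).ne' measure_ball_lt_top.ne).ne'
  refine (hΓ.mul_const _).congr' ?_
  filter_upwards [Ioo_mem_nhdsGT hb₀] with t ht
  rw [hausdorffMeasure_inter_sphere_div_eq Ω ht.1, div_mul_cancel₀ _ huniv, angularMeasure]
  congr 1 with θ
  exact hΩ _ (by simpa [norm_smul, abs_of_pos ht.1] using ht.2)

variable {ν : WithLp 2 (E × ℝ) → WithLp 2 (E × ℝ)}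

theorem ae_conormal_eq_graphJacobian_smul (hf : LipschitzWith K f)
    (hΩ : ∀ x ∈ ball (0 : WithLp 2 (E × ℝ)) b₀, x ∈ Ω ↔ x ∈ supergraph f)
    (hν : ∀ᵐ x ∂(μH[Module.finrank ℝ E]).restrict (frontier Ω), IsWeakOutwardNormalAt Ω x (ν x))
    {B : Set (WithLp 2 (E × ℝ))} (hB : MeasurableSet B) (hB₀ : B ⊆ ball 0 b₀) :
    ∀ᵐ y ∂(μH[Module.finrank ℝ E] : Measure E).restrict (graphMap f ⁻¹' B),
      conormal (fderiv ℝ f y) = graphJacobian (fderiv ℝ f y) • ν (graphMap f y) := by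
  have hνB := ae_restrict_of_ae_restrict_of_subset (Set.inter_subset_left (t := B)) hν
  rw [frontier_inter_eq_range_graphMap_inter hf.continuous hΩ hB₀,
    ae_restrict_range_graphMap_inter_iff hf hB] at hνB
  have hBpre : MeasurableSet (graphMap f ⁻¹' B) :=
    (isClosedEmbedding_graphMap hf.continuous).continuous.measurable hB
  filter_upwards [hνB, ae_restrict_mem hBpre, ae_restrict_of_ae hf.ae_differentiableAt]
    with y hy hyB hdiff
  exact conormal_eq_graphJacobian_smul hdiff
    (Filter.mem_of_superset (isOpen_ball.mem_nhds (hB₀ hyB)) fun x hx ↦ (hΩ x hx).1) hy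

theorem integrableOn_conormal_fderiv (hf : LipschitzWith K f) {s : Set E}
    {μ : Measure E} (hs : μ s ≠ ∞) : IntegrableOn (fun y ↦ conormal (fderiv ℝ f y)) s μ := by
  obtain ⟨C, hC⟩ := (isCompact_closedBall (0 : E →L[ℝ] ℝ) K).exists_bound_of_continuousOn
    continuous_conormal.continuousOn
  exact Measure.integrableOn_of_bounded hs
    (continuous_conormal.measurable.comp (measurable_fderiv ℝ f)).aestronglyMeasurable
    (.of_forall fun y ↦ hC _ (mem_closedBall_zero_iff.2 (norm_fderiv_le_of_lipschitz ℝ hf)))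

theorem integrableAtFilter_normal_of_supergraph (hf : LipschitzWith K f) (hb₀ : 0 < b₀)
    (hΩ : ∀ x ∈ ball (0 : WithLp 2 (E × ℝ)) b₀, x ∈ Ω ↔ x ∈ supergraph f)
    (hν : ∀ᵐ x ∂(μH[Module.finrank ℝ E]).restrict (frontier Ω), IsWeakOutwardNormalAt Ω x (ν x)) :
    IntegrableAtFilter ν (𝓝[frontier Ω] 0) μH[Module.finrank ℝ E] := by
  refine ⟨frontier Ω ∩ ball 0 b₀, inter_mem_nhdsWithin _ (ball_mem_nhds 0 hb₀), ?_⟩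
  have hfinite : (μH[Module.finrank ℝ E] : Measure E) (graphMap f ⁻¹' ball 0 b₀) ≠ ∞ := by
    refine ((measure_mono fun y hy ↦ ?_).trans_lt (isCompact_preimage_norm_graphMap_Icc
      hf.continuous 0 b₀).measure_lt_top).ne
    exact ⟨norm_nonneg _, (mem_ball_zero_iff.1 hy).le⟩
  rw [frontier_inter_eq_range_graphMap_inter hf.continuous hΩ subset_rfl,
    integrableOn_range_graphMap_inter_iff hf measurableSet_ball]
  exact (integrableOn_conormal_fderiv hf hfinite).congr
    (ae_conormal_eq_graphJacobian_smul hf hΩ hν measurableSet_ball subset_rfl)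

theorem exists_tendsto_principal_value_of_supergraph (hf : LipschitzWith K f) (hb₀ : 0 < b₀)
    (hΩ : ∀ x ∈ ball (0 : WithLp 2 (E × ℝ)) b₀, x ∈ Ω ↔ x ∈ supergraph f)
    (hν : ∀ᵐ x ∂(μH[Module.finrank ℝ E]).restrict (frontier Ω), IsWeakOutwardNormalAt Ω x (ν x))
    {Γ : ℝ} (hΓ : Tendsto (fun ε ↦ (μH[Module.finrank ℝ E] (Ω ∩ sphere 0 ε)).toReal /
      (μH[Module.finrank ℝ E] (sphere (0 : WithLp 2 (E × ℝ)) ε)).toReal) (𝓝[>] 0) (𝓝 Γ))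
    {b : ℝ} (hb : 0 < b) (hbb₀ : b ≤ b₀) (R : ℝ) :
    ∃ I, Tendsto (fun ε ↦ ∫ x in frontier Ω ∩ (ball 0 b \ ball 0 ε),
      (1 - R / ‖x‖ ^ Module.finrank ℝ (WithLp 2 (E × ℝ))) * ⟪x, ν x⟫ ∂μH[Module.finrank ℝ E])
      (𝓝[>] 0) (𝓝 I) := by
  obtain ⟨I, hI⟩ := exists_tendsto_setIntegral_graph_principal_value hf μH[Module.finrank ℝ E]
    (tendsto_angularMeasure_of_hausdorffMeasure_sphere hb₀ hΩ hΓ) hb R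
  refine ⟨I, hI.congr fun ε ↦ ?_⟩
  have hmeas : MeasurableSet (ball (0 : WithLp 2 (E × ℝ)) b \ ball 0 ε) :=
    measurableSet_ball.diff measurableSet_ball
  have hsub : ball (0 : WithLp 2 (E × ℝ)) b \ ball 0 ε ⊆ ball 0 b₀ :=
    Set.sdiff_subset.trans (ball_subset_ball hbb₀)
  have hpre : graphMap f ⁻¹' (ball 0 b \ ball 0 ε) =
      (fun y ↦ ‖graphMap f y‖) ⁻¹' Set.Ico ε b := by
    ext y
    simp [and_comm]
  rw [frontier_inter_eq_range_graphMap_inter hf.continuous hΩ hsub,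
    setIntegral_range_graphMap_inter hf hmeas, ← hpre]
  refine integral_congr_ae ?_
  filter_upwards [ae_conormal_eq_graphJacobian_smul hf hΩ hν hmeas hsub] with y hy
  have hsupport : graphSupport f y =
      graphJacobian (fderiv ℝ f y) * ⟪graphMap f y, ν (graphMap f y)⟫ := by
    rw [← real_inner_smul_right, ← hy, real_inner_comm, inner_conormal]
    rfl
  rw [hsupport, smul_eq_mul]
  ring

end LocalGraph

section Isometry

variable {V H : Type*} [NormedAddCommGroup V] [InnerProductSpace ℝ V] [NormedAddCommGroup H]
  [InnerProductSpace ℝ H]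

theorem IsWeakOutwardNormalAt.preimage (S : V ≃ᵃⁱ[ℝ] H) {Ω : Set H} {v : V} {u : H}
    (h : IsWeakOutwardNormalAt Ω (S v) u) :
    IsWeakOutwardNormalAt (S ⁻¹' Ω) v (S.linearIsometryEquiv.symm u) := by
  refine ⟨by rw [LinearIsometryEquiv.norm_map, h.1], fun w hw ↦ ?_⟩
  rw [← S.linearIsometryEquiv.inner_map_map, LinearIsometryEquiv.apply_symm_apply] at hw
  filter_upwards [h.2 _ hw] with t ht
  rwa [Set.mem_preimage, add_comm, ← vadd_eq_add, S.map_vadd, map_smul, vadd_eq_add, add_comm]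

variable [MeasurableSpace V] [BorelSpace V] [MeasurableSpace H] [BorelSpace H]

theorem ae_isWeakOutwardNormalAt_preimage (S : V ≃ᵃⁱ[ℝ] H) {Ω : Set H} {ν : H → H} {d : ℝ}
    (hν : ∀ᵐ x ∂(μH[d]).restrict (frontier Ω), IsWeakOutwardNormalAt Ω x (ν x)) :
    ∀ᵐ v ∂(μH[d]).restrict (frontier (S ⁻¹' Ω)),
      IsWeakOutwardNormalAt (S ⁻¹' Ω) v (S.linearIsometryEquiv.symm (ν (S v))) := by
  have hfrontier : S ⁻¹' frontier Ω = frontier (S ⁻¹' Ω) := S.toHomeomorph.preimage_frontier Ω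
  have hmp := (S.toIsometryEquiv.measurePreserving_hausdorffMeasure d).restrict_preimage_emb
    S.toHomeomorph.measurableEmbedding (frontier Ω)
  rw [← hfrontier]
  exact (hmp.quasiMeasurePreserving.ae hν).mono fun v hv ↦ hv.preimage S

theorem integrableAtFilter_of_preimage (S : V ≃ᵃⁱ[ℝ] H) {s : Set H} {ν : H → H} {d : ℝ} {v : V}
    (h : IntegrableAtFilter (fun v ↦ S.linearIsometryEquiv.symm (ν (S v))) (𝓝[S ⁻¹' s] v) μH[d]) :
    IntegrableAtFilter ν (𝓝[s] (S v)) μH[d] := by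
  obtain ⟨t, ht, hint⟩ := h
  have himage : S ⁻¹' (S.symm ⁻¹' t) = t := by
    ext w
    simp
  refine ⟨S.symm ⁻¹' t, ?_, ?_⟩
  · refine S.symm.continuous.continuousWithinAt.tendsto_nhdsWithin (t := S ⁻¹' s)
      (fun x hx ↦ by simpa using hx) ?_
    rwa [S.symm_apply_apply]
  · refine ((S.toIsometryEquiv.measurePreserving_hausdorffMeasure d).integrableOn_comp_preimage
      S.toHomeomorph.measurableEmbedding).1 ?_
    have hcomp : IntegrableOn (fun v ↦ ν (S v)) t μH[d] :=
      S.linearIsometryEquiv.symm.toContinuousLinearEquiv.integrable_comp_iff.1 hint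
    exact himage.symm ▸ hcomp

theorem setIntegral_annulus_comp_affineIsometryEquiv (S : V ≃ᵃⁱ[ℝ] H) (Ω : Set H) (ν : H → H)
    (d : ℝ) (k : ℝ → ℝ) (b ε : ℝ) :
    ∫ v in frontier (S ⁻¹' Ω) ∩ (ball 0 b \ ball 0 ε),
      k ‖v‖ * ⟪v, S.linearIsometryEquiv.symm (ν (S v))⟫ ∂μH[d] =
    ∫ x in frontier Ω ∩ (ball (S 0) b \ ball (S 0) ε), k ‖x - S 0‖ * ⟪x - S 0, ν x⟫ ∂μH[d] := by
  have hsub : ∀ v, S v - S 0 = S.linearIsometryEquiv v := fun v ↦ by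
    simpa using (S.map_vsub v 0).symm
  have hfrontier : S ⁻¹' frontier Ω = frontier (S ⁻¹' Ω) := S.toHomeomorph.preimage_frontier Ω
  have hball : ∀ t, S ⁻¹' ball (S 0) t = ball 0 t := fun t ↦ by
    ext v
    simp [S.dist_map]
  rw [← (S.toIsometryEquiv.measurePreserving_hausdorffMeasure d).setIntegral_preimage_emb
    S.toHomeomorph.measurableEmbedding]
  simp only [AffineIsometryEquiv.coe_toIsometryEquiv, Set.preimage_inter, Set.preimage_sdiff,
    hfrontier, hball, hsub, LinearIsometryEquiv.norm_map]
  congr 1 with v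
  rw [← S.linearIsometryEquiv.symm.inner_map_map, LinearIsometryEquiv.symm_apply_apply]

end Isometry

section Annulus

variable {H : Type*} [NormedAddCommGroup H]

theorem exists_tendsto_setIntegral_annulus_of_le [MeasurableSpace H] [OpensMeasurableSpace H]
    {μ : Measure H} {F : H → ℝ} {s : Set H} (hs : MeasurableSet s) {p : H} {b r : ℝ} (hb : 0 < b)
    (hbr : b ≤ r) (hF : ∀ ε > 0, IntegrableOn F (s ∩ (ball p r \ ball p ε)) μ)
    (h : ∃ I, Tendsto (fun ε ↦ ∫ x in s ∩ (ball p b \ ball p ε), F x ∂μ) (𝓝[>] 0) (𝓝 I)) :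
    ∃ I, Tendsto (fun ε ↦ ∫ x in s ∩ (ball p r \ ball p ε), F x ∂μ) (𝓝[>] 0) (𝓝 I) := by
  obtain ⟨I, hI⟩ := h
  refine ⟨_, (hI.const_add (∫ x in s ∩ (ball p r \ ball p b), F x ∂μ)).congr' ?_⟩
  filter_upwards [Ioo_mem_nhdsGT hb] with ε hε
  have hdisj : Disjoint (s ∩ (ball p r \ ball p b)) (s ∩ (ball p b \ ball p ε)) :=
    Set.disjoint_left.2 fun x hx hx' ↦ hx.2.2 hx'.2.1
  have hinner : s ∩ (ball p b \ ball p ε) ⊆ s ∩ (ball p r \ ball p ε) :=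
    Set.inter_subset_inter_right _ (Set.sdiff_subset_sdiff_left (ball_subset_ball hbr))
  rw [← setIntegral_union hdisj (hs.inter (measurableSet_ball.diff measurableSet_ball))
    (hF b hb) ((hF ε hε.1).mono_set hinner), ← Set.inter_union_distrib_left,
    Set.sdiff_union_sdiff_cancel (ball_subset_ball hbr) (ball_subset_ball hε.2.le)]

variable [InnerProductSpace ℝ H] [FiniteDimensional ℝ H] [MeasurableSpace H] [BorelSpace H]

theorem integrableOn_annulus_of_locallyIntegrableOn {μ : Measure H} {s : Set H} (hs : IsClosed s)
    {ν : H → H} (hν : LocallyIntegrableOn ν s μ) (p : H) (m : ℕ) (R r : ℝ) {ε : ℝ} (hε : 0 < ε) :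
    IntegrableOn (fun x ↦ (1 - R / ‖x - p‖ ^ m) * ⟪x - p, ν x⟫)
      (s ∩ (ball p r \ ball p ε)) μ := by
  have hcompact : IsCompact (s ∩ (closedBall p r \ ball p ε)) :=
    ((isCompact_closedBall p r).diff isOpen_ball).inter_left hs
  have hcont : ContinuousOn (fun x ↦ (1 - R / ‖x - p‖ ^ m) • (x - p))
      (s ∩ (closedBall p r \ ball p ε)) := by
    refine ContinuousOn.smul (continuousOn_const.sub (continuousOn_const.div (by fun_prop)
      fun x hx ↦ pow_ne_zero m ?_)) (by fun_prop)
    exact (hε.trans_le (by simpa [dist_eq_norm] using hx.2.2)).ne'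
  obtain ⟨C, hC⟩ := hcompact.exists_bound_of_continuousOn hcont
  have hint := hν.integrableOn_compact_subset Set.inter_subset_left hcompact
  have hintegrable : IntegrableOn (fun x ↦ (1 - R / ‖x - p‖ ^ m) * ⟪x - p, ν x⟫)
      (s ∩ (closedBall p r \ ball p ε)) μ := by
    simp only [← real_inner_smul_left]
    refine (hint.norm.const_mul C).mono'
      ((hcont.aestronglyMeasurable hcompact.measurableSet).inner hint.aestronglyMeasurable) ?_
    filter_upwards [ae_restrict_mem hcompact.measurableSet] with x hx
    exact (norm_inner_le_norm _ _).trans (by gcongr; exact hC x hx)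
  exact hintegrable.mono_set (by gcongr; exact ball_subset_closedBall)

end Annulus

section Chart

theorem norm_sq_firstCoords_add_lastCoord {n : ℕ} (hn : 0 < n) (x : EuclideanSpace ℝ (Fin n)) :
    ‖firstCoords x‖ ^ 2 + lastCoord x ^ 2 = ‖x‖ ^ 2 := by
  obtain ⟨k, rfl⟩ := Nat.exists_eq_succ_of_ne_zero hn.ne'
  rw [EuclideanSpace.norm_sq_eq, EuclideanSpace.norm_sq_eq x, Fin.sum_univ_castSucc]
  simp only [Real.norm_eq_abs, sq_abs]
  congr 1

theorem finrank_withLp_euclideanSpace_prod {n : ℕ} (hn : 0 < n) :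
    Module.finrank ℝ (WithLp 2 (EuclideanSpace ℝ (Fin (n - 1)) × ℝ)) = n := by
  rw [(WithLp.linearEquiv 2 ℝ (EuclideanSpace ℝ (Fin (n - 1)) × ℝ)).finrank_eq,
    Module.finrank_prod, finrank_euclideanSpace_fin, Module.finrank_self, Nat.sub_add_cancel hn]

/-- Splitting off the last coordinate, as a linear isometry of `ℝⁿ` onto `ℝⁿ⁻¹ × ℝ`: it turns the
local description of `HasLipschitzBoundary` into a `supergraph`. -/
def splitLastCoord {n : ℕ} (hn : 0 < n) :
    EuclideanSpace ℝ (Fin n) ≃ₗᵢ[ℝ] WithLp 2 (EuclideanSpace ℝ (Fin (n - 1)) × ℝ) :=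
  LinearIsometry.toLinearIsometryEquiv
    { toFun := fun x ↦ WithLp.toLp 2 (firstCoords x, lastCoord x)
      map_add' := fun x y ↦ WithLp.ofLp_injective 2 (Prod.ext rfl (by simp [lastCoord, hn]))
      map_smul' := fun c x ↦ WithLp.ofLp_injective 2 (Prod.ext rfl (by simp [lastCoord, hn]))
      norm_map' := fun x ↦ by
        rw [← sq_eq_sq₀ (norm_nonneg _) (norm_nonneg _), WithLp.prod_norm_sq_eq_of_L2,
          ← norm_sq_firstCoords_add_lastCoord hn x]
        simp }
    (by rw [finrank_withLp_euclideanSpace_prod hn, finrank_euclideanSpace_fin])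

variable {n : ℕ} {Ω : Set (EuclideanSpace ℝ (Fin n))} {p : EuclideanSpace ℝ (Fin n)}

theorem pos_of_mem_frontier (hp : p ∈ frontier Ω) : 0 < n := by
  rcases Nat.eq_zero_or_pos n with rfl | hn
  · rw [(isClopen_discrete Ω).frontier_eq] at hp
    exact hp.elim
  · exact hn

theorem HasLipschitzBoundary.exists_chart (hΩ : HasLipschitzBoundary Ω) (hp : p ∈ frontier Ω) :
    ∃ (S : WithLp 2 (EuclideanSpace ℝ (Fin (n - 1)) × ℝ) ≃ᵃⁱ[ℝ] EuclideanSpace ℝ (Fin n))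
      (f : EuclideanSpace ℝ (Fin (n - 1)) → ℝ) (K : ℝ≥0) (b : ℝ),
      S 0 = p ∧ LipschitzWith K f ∧ 0 < b ∧
        ∀ v ∈ ball 0 b, v ∈ S ⁻¹' Ω ↔ v ∈ supergraph f := by
  obtain ⟨A, f, K, U, hAp, hf, hUo, hpU, hU⟩ := hΩ p hp
  let S := (A.trans (splitLastCoord (pos_of_mem_frontier hp)).toAffineIsometryEquiv).symm
  have hS0 : S 0 = p := by
    refine (AffineIsometryEquiv.symm_apply_eq _).2 ?_
    simp [hAp]
  obtain ⟨b, hb, hbU⟩ := Metric.isOpen_iff.1 (hUo.preimage S.continuous) 0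
    (by simpa [hS0] using hpU)
  refine ⟨S, f, K, b, hS0, hf, hb, fun v hv ↦ (hU _ (hbU hv)).trans ?_⟩
  have hv : splitLastCoord (pos_of_mem_frontier hp) (A (S v)) = v :=
    S.symm_apply_apply v
  conv_rhs => rw [← hv]
  exact Iff.rfl

end Chart

section PrincipalValue

theorem natCast_sub_one_eq_finrank {n : ℕ} (hn : 0 < n) :
    (n : ℝ) - 1 = (Module.finrank ℝ (EuclideanSpace ℝ (Fin (n - 1))) : ℝ) := by
  rw [finrank_euclideanSpace_fin, Nat.cast_pred hn]

variable {n : ℕ} {Ω : Set (EuclideanSpace ℝ (Fin n))}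
  {ν : EuclideanSpace ℝ (Fin n) → EuclideanSpace ℝ (Fin n)}

theorem HasLipschitzBoundary.locallyIntegrableOn_normal (hΩ : HasLipschitzBoundary Ω)
    (hν : ∀ᵐ x ∂(μH[(n : ℝ) - 1].restrict (frontier Ω)), IsWeakOutwardNormalAt Ω x (ν x)) :
    LocallyIntegrableOn ν (frontier Ω) μH[(n : ℝ) - 1] := by
  intro p hp
  obtain ⟨S, f, K, b, rfl, hf, hb, hchart⟩ := hΩ.exists_chart hp
  have hfrontier : frontier (S ⁻¹' Ω) = S ⁻¹' frontier Ω :=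
    (S.toHomeomorph.preimage_frontier Ω).symm
  rw [natCast_sub_one_eq_finrank (pos_of_mem_frontier hp)] at hν ⊢
  refine integrableAtFilter_of_preimage S ?_
  rw [← hfrontier]
  exact integrableAtFilter_normal_of_supergraph hf hb hchart
    (ae_isWeakOutwardNormalAt_preimage S hν)

theorem HasLipschitzBoundary.exists_tendsto_principal_value_near (hΩ : HasLipschitzBoundary Ω)
    {p : EuclideanSpace ℝ (Fin n)} (hp : p ∈ frontier Ω)
    (hν : ∀ᵐ x ∂(μH[(n : ℝ) - 1].restrict (frontier Ω)), IsWeakOutwardNormalAt Ω x (ν x)) {Γ : ℝ}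
    (hΓ : Tendsto (fun ε ↦
      (μH[(n : ℝ) - 1] (Ω ∩ sphere p ε)).toReal / (μH[(n : ℝ) - 1] (sphere p ε)).toReal)
      (𝓝[>] 0) (𝓝 Γ)) (R : ℝ) :
    ∃ b₀ > 0, ∀ b > 0, b ≤ b₀ → ∃ I, Tendsto (fun ε ↦
      ∫ x in frontier Ω ∩ (ball p b \ ball p ε),
        (1 - R / ‖x - p‖ ^ n) * ⟪x - p, ν x⟫ ∂μH[(n : ℝ) - 1]) (𝓝[>] 0) (𝓝 I) := by
  obtain ⟨S, f, K, b₀, rfl, hf, hb₀, hchart⟩ := hΩ.exists_chart hp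
  have hn := pos_of_mem_frontier hp
  rw [natCast_sub_one_eq_finrank hn] at hν hΓ ⊢
  have hsphere : ∀ t, S ⁻¹' sphere (S 0) t = sphere 0 t := fun t ↦ by
    ext v
    rw [Set.mem_preimage, mem_sphere, mem_sphere, S.dist_map]
  simp only [← S.toIsometryEquiv.hausdorffMeasure_preimage, Set.preimage_inter,
    AffineIsometryEquiv.coe_toIsometryEquiv, hsphere] at hΓ
  refine ⟨b₀, hb₀, fun b hb hbb₀ ↦ ?_⟩
  have hlocal := exists_tendsto_principal_value_of_supergraph hf hb₀ hchart
    (ae_isWeakOutwardNormalAt_preimage S hν) hΓ hb hbb₀ R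
  simpa only [finrank_withLp_euclideanSpace_prod hn,
    setIntegral_annulus_comp_affineIsometryEquiv S Ω ν _ (fun t ↦ 1 - R / t ^ n)] using hlocal

end PrincipalValue

theorem principal_value_integral_exists_general {n : ℕ} {Ω : Set (EuclideanSpace ℝ (Fin n))}
    (hΩ : HasLipschitzBoundary Ω) {p : EuclideanSpace ℝ (Fin n)} (hp : p ∈ frontier Ω)
    {ν : EuclideanSpace ℝ (Fin n) → EuclideanSpace ℝ (Fin n)}
    (hν : ∀ᵐ x ∂(μH[(n : ℝ) - 1].restrict (frontier Ω)), IsWeakOutwardNormalAt Ω x (ν x))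
    {r : ℝ} (hr : 0 < r) (R : ℝ) {Γ : ℝ}
    (hΓ : Tendsto (fun ε ↦
      (μH[(n : ℝ) - 1] (Ω ∩ sphere p ε)).toReal / (μH[(n : ℝ) - 1] (sphere p ε)).toReal)
      (𝓝[>] 0) (𝓝 Γ)) :
    ∃ I, Tendsto (fun ε ↦ ∫ x in frontier Ω ∩ (ball p r \ ball p ε),
      (1 - R / ‖x - p‖ ^ n) * ⟪x - p, ν x⟫ ∂μH[(n : ℝ) - 1]) (𝓝[>] 0) (𝓝 I) := by
  obtain ⟨b₀, hb₀, hnear⟩ := hΩ.exists_tendsto_principal_value_near hp hν hΓ R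
  have hintegrable : ∀ ε > 0, IntegrableOn (fun x ↦ (1 - R / ‖x - p‖ ^ n) * ⟪x - p, ν x⟫)
      (frontier Ω ∩ (ball p r \ ball p ε)) μH[(n : ℝ) - 1] := fun ε hε ↦
    integrableOn_annulus_of_locallyIntegrableOn isClosed_frontier
      (hΩ.locallyIntegrableOn_normal hν) p n R r hε
  exact exists_tendsto_setIntegral_annulus_of_le isClosed_frontier.measurableSet (lt_min hr hb₀)
    (min_le_left r b₀) hintegrable (hnear _ (lt_min hr hb₀) (min_le_right r b₀))

/-- Under the hypotheses of Theorem 3.1 (in particular, assuming the limit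
`Γ(p)` exists), the principal value
`lim_{ε→0⁺} ∫_{S ∩ (B_r(p) ∖ B_ε(p))} (1 - rⁿ/|x-p|ⁿ)(x-p)·ν dH^{n-1}` exists and is finite. -/
theorem principal_value_integral_exists
    (n : ℕ) (hn : 2 ≤ n)
    (Ω : Set (EuclideanSpace ℝ (Fin n))) (hΩo : IsOpen Ω)
    (hΩb : Bornology.IsBounded Ω) (hΩl : HasLipschitzBoundary Ω)
    (p : EuclideanSpace ℝ (Fin n)) (hp : p ∈ frontier Ω)
    (ν : EuclideanSpace ℝ (Fin n) → EuclideanSpace ℝ (Fin n))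
    (hν : ∀ᵐ x ∂(μH[(n : ℝ) - 1].restrict (frontier Ω)), IsOutwardNormalAt Ω x (ν x))
    (r : ℝ) (hr : 0 < r)
    (Γ : ℝ)
    (hΓ : Tendsto (fun ε : ℝ =>
        (μH[(n : ℝ) - 1] (Ω ∩ sphere p ε)).toReal / (μH[(n : ℝ) - 1] (sphere p ε)).toReal)
      (𝓝[>] 0) (𝓝 Γ)) :
    ∃ I : ℝ, Tendsto (fun ε : ℝ =>
        ∫ x in frontier Ω ∩ (ball p r \ ball p ε),
          (1 - r ^ n / ‖x - p‖ ^ n) * ⟪x - p, ν x⟫ ∂μH[(n : ℝ) - 1])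
      (𝓝[>] 0) (𝓝 I) :=
  principal_value_integral_exists_general hΩl hp
    (hν.mono fun _ hx ↦ hx.isWeakOutwardNormalAt) hr (r ^ n) hΓ
end
end

section
/- Let a, b ∈ ℝ, set c = √(a² + b²), let δ ∈ ℝ satisfy a = c cos δ and b = c sin δ, and set d = c/√(1 + c²). Define h(θ) = arccot(a cos θ + b sin θ), where arccot : ℝ → (0, π) is the inverse cotangent. Then for all θ₁ ≤ θ₂, ∫_{θ₁}^{θ₂} ∫_0^{h(θ)} sin φ dφ dθ = (θ₂ − θ₁) − arcsin(d sin(θ₂ − δ)) + arcsin(d sin(θ₁ − δ)). -/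
/-!
The inner integral is `1 - cos (h θ) = 1 - sin (arctan (c cos (θ - δ)))`. Since
`1 - d² sin² x = (1 + c² cos² x) / (1 + c²)`, the function `arcsin (d sin x)` is an
antiderivative of `sin (arctan (c cos x))`. The scale is `d = sin (arctan c)`, where `arctan c`
is the inclination of the plane.
-/

open Real intervalIntegral

noncomputable section

/-- The inverse cotangent `arccot : ℝ → (0, π)`, the branch satisfying
`cot (arccot t) = t` and `arccot t ∈ (0, π)`. -/
def arccot (t : ℝ) : ℝ := π / 2 - Real.arctan t

theorem one_sub_sq_sin_arctan_mul_sin (c x : ℝ) :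
    1 - (sin (arctan c) * sin x) ^ 2 = (1 + (c * cos x) ^ 2) / (1 + c ^ 2) := by
  rw [mul_pow, sin_sq_arctan, sin_sq, mul_pow]
  field_simp
  ring

theorem abs_sin_arctan_mul_sin_lt_one (c x : ℝ) : |sin (arctan c) * sin x| < 1 := by
  rw [← sq_lt_one_iff_abs_lt_one, ← sub_pos, one_sub_sq_sin_arctan_mul_sin]
  positivity

theorem hasDerivAt_arcsin_sin_arctan_mul_sin (c x : ℝ) :
    HasDerivAt (fun y => arcsin (sin (arctan c) * sin y)) (sin (arctan (c * cos x))) x := by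
  obtain ⟨hlower, hupper⟩ := abs_lt.1 (abs_sin_arctan_mul_sin_lt_one c x)
  have hchain := (hasDerivAt_arcsin hlower.ne' hupper.ne).comp x
    ((hasDerivAt_sin x).const_mul (sin (arctan c)))
  refine hchain.congr_deriv ?_
  rw [one_sub_sq_sin_arctan_mul_sin, sqrt_div (by positivity), sin_arctan, sin_arctan]
  field_simp

theorem integral_sin_arctan_mul_cos (c α β : ℝ) :
    ∫ x in α..β, sin (arctan (c * cos x)) =
      arcsin (sin (arctan c) * sin β) - arcsin (sin (arctan c) * sin α) :=
  integral_eq_sub_of_hasDerivAt (fun x _ => hasDerivAt_arcsin_sin_arctan_mul_sin c x)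
    (Continuous.intervalIntegrable (by fun_prop) α β)

theorem cos_arccot (t : ℝ) : cos (arccot t) = sin (arctan t) :=
  cos_pi_div_two_sub (arctan t)

theorem integral_integral_sin_arccot_mul_cos (c α β : ℝ) :
    ∫ θ in α..β, ∫ φ in (0 : ℝ)..arccot (c * cos θ), sin φ =
      (β - α) - arcsin (sin (arctan c) * sin β) + arcsin (sin (arctan c) * sin α) := by
  simp only [integral_sin, cos_zero, cos_arccot]
  rw [intervalIntegral.integral_sub intervalIntegrable_const
      (Continuous.intervalIntegrable (by fun_prop) α β),
    integral_one, integral_sin_arctan_mul_cos]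
  ring

/-- With `c = √(a² + b²)`, `δ` such that `a = c cos δ` and `b = c sin δ`,
`d = c/√(1+c²)` and `h(θ) = arccot(a cos θ + b sin θ)`, for all `θ₁ ≤ θ₂`:
`∫_{θ₁}^{θ₂} ∫_0^{h(θ)} sin φ dφ dθ
  = (θ₂ - θ₁) - arcsin(d sin(θ₂ - δ)) + arcsin(d sin(θ₁ - δ))`. -/
theorem solid_angle_sector_integral
    (a b : ℝ) (c : ℝ) (hc : c = Real.sqrt (a ^ 2 + b ^ 2))
    (δ : ℝ) (hδa : a = c * Real.cos δ) (hδb : b = c * Real.sin δ)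
    (d : ℝ) (hd : d = c / Real.sqrt (1 + c ^ 2))
    (h : ℝ → ℝ) (hh : h = fun θ => arccot (a * Real.cos θ + b * Real.sin θ)) :
    ∀ θ₁ θ₂ : ℝ, θ₁ ≤ θ₂ →
      (∫ θ in θ₁..θ₂, ∫ φ in (0 : ℝ)..(h θ), Real.sin φ) =
        (θ₂ - θ₁) - Real.arcsin (d * Real.sin (θ₂ - δ)) + Real.arcsin (d * Real.sin (θ₁ - δ)) := by
  intro θ₁ θ₂ _
  have hphase (θ : ℝ) : a * cos θ + b * sin θ = c * cos (θ - δ) := by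
    rw [hδa, hδb, cos_sub]
    ring
  have hscale : d = sin (arctan c) := by rw [hd, sin_arctan]
  simp only [hh, hphase, hscale]
  rw [integral_comp_sub_right (fun θ => ∫ φ in (0 : ℝ)..arccot (c * cos θ), sin φ) δ,
    integral_integral_sin_arccot_mul_cos]
  ring
end
end
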